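/- Let f : S² → S² be a polynomial-like mapping of degree d ≥ 2. If {A_1, …, A_n} is an irreducible decomposition of J(f), then for every pair of indices i, j the set f⁻¹(A_i \ A_j) is connected. -/

import Mathlib

/-!
Write `J` for the Julia set, the boundary of the fully invariant region `R`, and `B i` for the part
of `A i` lying in no other piece.

The plane topology is contained in `nowhere_dense`: if `A` is an indecomposable continuum in `J`, and
`F` is a continuum disjoint from `R` that does not contain `A`, then `F` is nowhere dense in `A`.
This rests on Janiszewski's theorem (`janiszewski`), that the union of two continua with
disconnected intersection separates the sphere. It is proved after Borsuk: a nonvanishing function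
on a plane compactum is an exponential up to a rational factor (`exists_log_mod_rat`), so the
functions `z - a` with `a` off the compactum detect all obstructions to continuous logarithms.
By Baire category, removing countably many such `F` from `A` leaves either nothing or a set that
contains a composant, hence is connected and dense in `A` (`diff_sUnion`).

A branched covering lifts approximations to a clopen part of any fibre (`FinBranched.lift`), and the
preimage of a continuum has finitely many components (`FinBranched.finite_components`). Hence
`diff_sUnion` applies to `A k` and the preimage of the union of the `A l` with `l ≠ i`: the set of
points of `A k` over `B i` is empty or connected and dense in `A k`. By density, `A k` lies
over at most one `B i`; every `B i` is hit by some `A k`; counting the finitely many indices, exactly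
one `A k` has points over `B i`, so `J ∩ f⁻¹(B i)` is connected (`FinBranched.isPreconnected_piece`).

Let `i ≠ j`, so that `B i ⊆ A i \ A j`. In a separation of `f⁻¹(A i \ A j)`, each of the two parts
contains a clopen part of some fibre. As `B i` is dense in `A i`, lifting yields a fibre over `B i`
that meets this part, and as `B i` is in the closure of `R` and `f⁻¹(R) = R`, lifting again yields a
point of `J` there. So both parts meet the connected set `J ∩ f⁻¹(B i)`, a contradiction.
-/

open Set Metric Topology Filter

noncomputable section

/-- The 2-dimensional sphere, realized as the unit sphere in `ℝ³`. -/
abbrev S2 : Type := ↥(Metric.sphere (0 : EuclideanSpace ℝ (Fin 3)) 1)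

/-- A continuum is a nonempty compact connected (metric) space. -/
def IsContinuum {α : Type*} [TopologicalSpace α] (X : Set α) : Prop :=
  IsCompact X ∧ IsConnected X

/-- A continuum is indecomposable when it is not the union of two proper subcontinua. -/
def IsIndecomposable {α : Type*} [TopologicalSpace α] (X : Set α) : Prop :=
  IsContinuum X ∧
    ¬ ∃ A B : Set α, IsContinuum A ∧ A ⊆ X ∧ A ≠ X ∧
      IsContinuum B ∧ B ⊆ X ∧ B ≠ X ∧ A ∪ B = X

/-- The composant of a point `p` in a continuum `X`: the union of all proper
subcontinua of `X` containing `p`. -/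
def composant {α : Type*} [TopologicalSpace α] (X : Set α) (p : α) : Set α :=
  ⋃₀ {K : Set α | IsContinuum K ∧ K ⊆ X ∧ K ≠ X ∧ p ∈ K}

/-- `C` is a composant of `X` when it is the composant of some point of `X`. -/
def IsComposant {α : Type*} [TopologicalSpace α] (X C : Set α) : Prop :=
  ∃ p ∈ X, C = composant X p

/-- A composant `C` of `X` is internal when every continuum intersecting `C`
but not contained in `X` intersects every composant of `X`. -/
def IsInternalComposant {α : Type*} [TopologicalSpace α] (X C : Set α) : Prop :=
  IsComposant X C ∧
    ∀ L : Set α, IsContinuum L → (L ∩ C).Nonempty → ¬ L ⊆ X →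
      ∀ C' : Set α, IsComposant X C' → (L ∩ C').Nonempty

/-- An irreducible decomposition of a continuum `X`: a finite collection of
indecomposable subcontinua of `X` whose union is `X`, none of which is contained
in the union of the others. -/
def IsIrreducibleDecomposition {α : Type*} [TopologicalSpace α]
    (X : Set α) {n : ℕ} (A : Fin n → Set α) : Prop :=
  (∀ i, IsIndecomposable (A i) ∧ A i ⊆ X) ∧
    X = ⋃ i, A i ∧
    ∀ j, ¬ A j ⊆ ⋃ i ∈ ({j}ᶜ : Set (Fin n)), A i

/-- A set `A` separates the sphere when its complement is disconnected. -/
def Separates (A : Set S2) : Prop := ¬ IsPreconnected Aᶜ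

/-- A simple arc in the sphere with endpoints `a` and `b`. -/
def IsSimpleArc (A : Set S2) (a b : S2) : Prop :=
  ∃ γ : ℝ → S2, ContinuousOn γ (Icc 0 1) ∧ InjOn γ (Icc 0 1) ∧
    γ '' Icc 0 1 = A ∧ γ 0 = a ∧ γ 1 = b

/-- `f` is locally topologically conjugate, at the point `c`, to the map
`z ↦ z ^ k` of the unit disk (so `c` is a critical point of local degree `k - 1`
when `k ≥ 2`). -/
def LocallyZPowAt (f : S2 → S2) (c : S2) (k : ℕ) : Prop :=
  ∃ (φ : PartialHomeomorph S2 ℂ) (ψ : PartialHomeomorph ℂ S2),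
    c ∈ φ.source ∧ φ.target = Metric.ball (0 : ℂ) 1 ∧
    ψ.source = Metric.ball (0 : ℂ) 1 ∧ f c ∈ ψ.target ∧
    ∀ x ∈ φ.source, f x = ψ ((φ x) ^ k)

/-- A branched covering of the sphere of degree `d`: a continuous map which is a
`d`-fold covering map away from a finite set of critical points, near each of which
it is locally conjugate to `z ↦ z ^ k` on the unit disk for some `k ≥ 2`. -/
def IsBranchedCovering (f : S2 → S2) (d : ℕ) : Prop :=
  Continuous f ∧
    ∃ Crit : Set S2, Crit.Finite ∧
      (∀ c ∈ Crit, ∃ k, 2 ≤ k ∧ LocallyZPowAt f c k) ∧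
      IsCoveringMapOn f ((f '' Crit)ᶜ) ∧
      ∀ y ∉ f '' Crit, (f ⁻¹' {y}).ncard = d

/-- `f` is a polynomial-like mapping of degree `d`, with fully invariant simply
connected region `R` (whose complement has more than one point) containing the
critical point `c` of local degree `d - 1`.  The Julia set is `J(f) = frontier R`
and the filled Julia set is `Rᶜ`. -/
def IsPolynomialLike (f : S2 → S2) (d : ℕ) (R : Set S2) (c : S2) : Prop :=
  IsBranchedCovering f d ∧
    IsOpen R ∧ IsConnected R ∧ SimplyConnectedSpace ↥R ∧
    Set.Nontrivial Rᶜ ∧ f ⁻¹' R = R ∧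
    c ∈ R ∧ LocallyZPowAt f c d

/-- A crosscut of a region `U`: a simple arc contained in the closure of `U`
meeting the boundary of `U` exactly at its two (distinct) endpoints. -/
def IsCrosscut (U A : Set S2) : Prop :=
  ∃ a b : S2, a ≠ b ∧ IsSimpleArc A a b ∧ A ⊆ closure U ∧
    A ∩ frontier U = {a, b}

/-- A fundamental chain in `U`: a nested sequence of regions `Rc k`, each a
connected component of `U \ A k` for crosscuts `A k` whose diameters tend to `0`.
The impression of the corresponding prime end is `⋂ k, closure (Rc k)`. -/
def IsFundamentalChain (U : Set S2) (Rc : ℕ → Set S2) : Prop :=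
  ∃ A : ℕ → Set S2,
    (∀ k, IsCrosscut U (A k)) ∧
    (∀ k, ∃ x ∈ U \ A k, Rc k = connectedComponentIn (U \ A k) x) ∧
    (∀ k, Rc (k + 1) ⊆ Rc k) ∧
    Tendsto (fun k => Metric.diam (A k)) atTop (nhds 0)

end

/-! ### Logarithms and Borsuk's theorem in the plane -/

/-- `h` has a continuous logarithm on `X`. Below, a point `a` off `X` is called *linked* with `X` when
`z ↦ z - a` has no continuous logarithm on `X`. -/
def HasLog (X : Set ℂ) (h : ℂ → ℂ) : Prop :=
  ∃ u : ℂ → ℂ, ContinuousOn u X ∧ ∀ z ∈ X, Complex.exp (u z) = h z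

lemma HasLog.mul {X : Set ℂ} {g h : ℂ → ℂ} (hg : HasLog X g) (hh : HasLog X h) :
    HasLog X (fun z => g z * h z) := by
  obtain ⟨u, hu, hu'⟩ := hg
  obtain ⟨v, hv, hv'⟩ := hh
  exact ⟨fun z => u z + v z, hu.add hv, fun z hz => by rw [Complex.exp_add, hu' z hz, hv' z hz]⟩

lemma HasLog.zpow {X : Set ℂ} {g : ℂ → ℂ} (hg : HasLog X g) (n : ℤ) :
    HasLog X (fun z => g z ^ n) := by
  obtain ⟨u, hu, hu'⟩ := hg
  exact ⟨fun z => n * u z, continuousOn_const.mul hu,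
    fun z hz => by rw [Complex.exp_int_mul, hu' z hz]⟩

lemma HasLog.congr {X : Set ℂ} {g h : ℂ → ℂ} (hg : HasLog X g) (H : ∀ z ∈ X, g z = h z) :
    HasLog X h := by
  obtain ⟨u, hu, hu'⟩ := hg
  exact ⟨u, hu, fun z hz => by rw [hu' z hz, H z hz]⟩

lemma HasLog.one (X : Set ℂ) : HasLog X (fun _ => 1) :=
  ⟨fun _ => 0, continuousOn_const, fun _ _ => Complex.exp_zero⟩

/-- A continuous function whose values avoid a closed half-line from `0` has a logarithm. -/
lemma HasLog.of_slit {X : Set ℂ} {h : ℂ → ℂ} (ω : ℂ) (hω : ω ≠ 0) (hc : ContinuousOn h X)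
    (H : ∀ z ∈ X, ω * h z ∈ Complex.slitPlane) : HasLog X h := by
  refine ⟨fun z => Complex.log (ω * h z) - Complex.log ω,
    ((continuousOn_const.mul hc).clog H).sub continuousOn_const, fun z hz => ?_⟩
  have : ω * h z ≠ 0 := Complex.slitPlane_ne_zero (H z hz)
  rw [Complex.exp_sub, Complex.exp_log this, Complex.exp_log hω]
  field_simp

/-- The rational function `∏ (z - a) ^ n`, the product being over `(a, n) ∈ l`. -/
noncomputable def ratProd (l : List (ℂ × ℤ)) (z : ℂ) : ℂ :=
  (l.map fun a => (z - a.1) ^ a.2).prod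

lemma ratProd_append (l l' : List (ℂ × ℤ)) (z : ℂ) :
    ratProd (l ++ l') z = ratProd l z * ratProd l' z := by
  simp [ratProd]

lemma HasLog.ratProd {X : Set ℂ} (l : List (ℂ × ℤ))
    (H : ∀ a ∈ l, HasLog X (fun z => z - a.1)) : HasLog X (ratProd l) := by
  induction l with
  | nil => exact (HasLog.one X).congr fun z _ => by simp [_root_.ratProd]
  | cons a l ih =>
    exact (((H a (by simp)).zpow a.2).mul (ih fun b hb => H b (by simp [hb]))).congr
      fun z _ => by simp [_root_.ratProd]

/-- A property of intervals that holds for short intervals and passes to unions of adjacent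
intervals holds for all intervals. -/
lemma interval_induction (P : ℝ → ℝ → Prop)
    (hm : ∀ a b c, a ≤ b → b ≤ c → P a b → P b c → P a c)
    (δ : ℝ) (hδ : 0 < δ) (hs : ∀ a b, a ≤ b → b - a ≤ δ → P a b) :
    ∀ a b, a ≤ b → P a b := by
  have key : ∀ n : ℕ, ∀ a b, a ≤ b → b - a ≤ (n + 1) * δ → P a b := by
    intro n
    induction n with
    | zero => intro a b h1 h2; exact hs a b h1 (by simpa using h2)
    | succ n ih =>
      intro a b h1 h2
      by_cases h : b - a ≤ δ
      · exact hs a b h1 h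
      · push_cast at h2
        exact hm a (a + δ) b (by linarith) (by linarith) (hs _ _ (by linarith) (by linarith))
          (ih _ _ (by linarith) (by nlinarith))
  intro a b hab
  obtain ⟨n, hn⟩ := exists_nat_ge ((b - a) / δ)
  refine key n a b hab ?_
  rw [div_le_iff₀ hδ] at hn
  nlinarith

/-- The step function vanishing near `-∞` that jumps by `n` just after `t`, for `(t, n) ∈ l`. -/
noncomputable def jump (l : List (ℝ × ℤ)) (s : ℝ) : ℤ :=
  (l.map fun e => if e.1 < s then e.2 else 0).sum

lemma jump_append (l l' : List (ℝ × ℤ)) (s : ℝ) : jump (l ++ l') s = jump l s + jump l' s := by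
  simp [jump]

lemma jump_eq_zero (l : List (ℝ × ℤ)) (s : ℝ) (h : ∀ e ∈ l, s ≤ e.1) : jump l s = 0 := by
  induction l with
  | nil => simp [jump]
  | cons a l ih =>
    have := ih fun e he => h e (by simp [he])
    have h2 := h a (by simp)
    simp only [jump, List.map_cons, List.sum_cons] at this ⊢
    rw [this, if_neg (not_lt.2 h2), add_zero]

lemma jump_eq_sum (l : List (ℝ × ℤ)) (s : ℝ) (h : ∀ e ∈ l, e.1 < s) :
    jump l s = (l.map Prod.snd).sum := by
  induction l with
  | nil => simp [jump]
  | cons a l ih =>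
    have := ih fun e he => h e (by simp [he])
    have h2 := h a (by simp)
    simp only [jump, List.map_cons, List.sum_cons] at this ⊢
    rw [this, if_pos h2]

/-- A uniformly locally constant integer function on `S ⊆ ℝ` is, on each bounded interval, a step
function jumping only outside `S`. -/
lemma exists_jump (S : Set ℝ) (m : ℝ → ℤ) (δ : ℝ) (hδ : 0 < δ)
    (hm : ∀ s ∈ S, ∀ s' ∈ S, |s - s'| ≤ δ → m s = m s') (a b : ℝ) (hab : a ≤ b) :
    ∃ (l : List (ℝ × ℤ)) (m0 : ℤ), (∀ e ∈ l, e.1 ∈ Icc a b ∧ e.1 ∉ S) ∧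
      ∀ s ∈ S ∩ Icc a b, m s = m0 + jump l s := by
  refine interval_induction (fun a b => ∃ (l : List (ℝ × ℤ)) (m0 : ℤ),
    (∀ e ∈ l, e.1 ∈ Icc a b ∧ e.1 ∉ S) ∧ ∀ s ∈ S ∩ Icc a b, m s = m0 + jump l s)
    ?_ δ hδ ?_ a b hab
  · clear hab a b
    rintro a b c hab hbc ⟨l1, m1, h1, h1'⟩ ⟨l2, m2, h2, h2'⟩
    have left : ∀ s ∈ S ∩ Icc a b, m s = m1 + jump (l1 ++ l2) s := fun s hs => by
      rw [jump_append, jump_eq_zero l2 s fun e he => hs.2.2.trans (h2 e he).1.1, add_zero,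
        h1' s hs]
    have right : ∀ s ∈ S ∩ Icc b c,
        m s = m2 - (l1.map Prod.snd).sum + jump (l1 ++ l2) s := fun s hs => by
      rw [jump_append, jump_eq_sum l1 s fun e he =>
        lt_of_le_of_ne ((h1 e he).1.2.trans hs.2.1) fun h => (h1 e he).2 (h ▸ hs.1), h2' s hs]
      ring
    have mem12 : ∀ e ∈ l1 ++ l2, e.1 ∈ Icc a c ∧ e.1 ∉ S := by
      intro e he
      rcases List.mem_append.1 he with he | he
      · exact ⟨⟨(h1 e he).1.1, (h1 e he).1.2.trans hbc⟩, (h1 e he).2⟩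
      · exact ⟨⟨hab.trans (h2 e he).1.1, (h2 e he).1.2⟩, (h2 e he).2⟩
    by_cases hb : b ∈ S
    · refine ⟨l1 ++ l2, m1, mem12, fun s hs => ?_⟩
      have e1 := left b ⟨hb, hab, le_rfl⟩
      have e2 := right b ⟨hb, le_rfl, hbc⟩
      rcases le_total s b with h | h
      · exact left s ⟨hs.1, hs.2.1, h⟩
      · rw [right s ⟨hs.1, h, hs.2.2⟩]; linarith
    · refine ⟨(l1 ++ l2) ++ [(b, m2 - (l1.map Prod.snd).sum - m1)], m1, ?_, fun s hs => ?_⟩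
      · intro e he
        rcases List.mem_append.1 he with he | he
        · exact mem12 e he
        · rw [List.mem_singleton.1 he]; exact ⟨⟨hab, hbc⟩, hb⟩
      · rw [jump_append]
        rcases le_total s b with h | h
        · rw [left s ⟨hs.1, hs.2.1, h⟩]
          simp [jump, not_lt.2 h]
        · have : b < s := lt_of_le_of_ne h fun h => hb (h ▸ hs.1)
          rw [right s ⟨hs.1, h, hs.2.2⟩]
          simp [jump, this]; ring
  · clear hab a b
    intro a b hab hd
    by_cases hne : (S ∩ Icc a b).Nonempty
    · obtain ⟨s0, h0, h0'⟩ := hne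
      refine ⟨[], m s0, by simp, fun s hs => ?_⟩
      simp only [jump, List.map_nil, List.sum_nil, add_zero]
      refine hm s hs.1 s0 h0 ?_
      rw [abs_le]; constructor <;> linarith [hs.2.1, hs.2.2, h0'.1, h0'.2]
    · exact ⟨[], 0, by simp, fun s hs => (hne ⟨s, hs⟩).elim⟩

/-- Up to a rational function with zeros and poles in `B \ X`, the function `h` has a logarithm
on `X ∩ B`. -/
def LogModRat (X B : Set ℂ) (h : ℂ → ℂ) : Prop :=
  ∃ l : List (ℂ × ℤ), (∀ a ∈ l, a.1 ∈ B ∧ a.1 ∉ X) ∧ HasLog (X ∩ B) (fun z => h z * ratProd l z)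

lemma mem_slit_of_re_nonneg {w : ℂ} (h : 0 ≤ w.re) (hw : w ≠ 0) : w ∈ Complex.slitPlane := by
  rw [Complex.mem_slitPlane_iff]
  by_contra! hc
  exact hw (Complex.ext (le_antisymm hc.1 h) hc.2)

/-- Two logarithms of a product of factors `(z - a) ^ n` with `a` on the line
`Re (ω z) = c`, one on each side of the line; along the line their difference is, up to a constant,
`-2πi` times the step function with jumps `n` at the points `a`. -/
lemma two_logs (X B1 B2 : Set ℂ) (ω : ℂ) (hω : ω ≠ 0) (c : ℝ)
    (h1 : ∀ z ∈ B1, (ω * z).re ≤ c) (h2 : ∀ z ∈ B2, c ≤ (ω * z).re)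
    (l : List (ℝ × ℤ)) (hl : ∀ e ∈ l, ω⁻¹ * (c + e.1 * Complex.I) ∉ X) :
    ∃ (u v : ℂ → ℂ) (κ : ℂ), ContinuousOn u (X ∩ B1) ∧ ContinuousOn v (X ∩ B2) ∧
      (∀ z ∈ X ∩ B1, Complex.exp (u z) =
        ratProd (l.map fun e => (ω⁻¹ * (c + e.1 * Complex.I), e.2)) z) ∧
      (∀ z ∈ X ∩ B2, Complex.exp (v z) =
        ratProd (l.map fun e => (ω⁻¹ * (c + e.1 * Complex.I), e.2)) z) ∧
      ∀ z ∈ X ∩ (B1 ∩ B2), u z - v z =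
        κ - 2 * Real.pi * Complex.I * (jump l (ω * z).im : ℤ) := by
  induction l with
  | nil =>
    exact ⟨fun _ => 0, fun _ => 0, 0, continuousOn_const, continuousOn_const,
      by simp [ratProd], by simp [ratProd], by simp [jump]⟩
  | cons e l ih =>
    obtain ⟨u, v, κ, hu, hv, hu', hv', huv⟩ := ih fun e he => hl e (by simp [he])
    set a : ℂ := ω⁻¹ * (c + e.1 * Complex.I) with ha
    have haX : a ∉ X := hl e (by simp)
    have hωa : ω * a = c + e.1 * Complex.I := by rw [ha]; field_simp
    have hre : ∀ z, (ω * (z - a)).re = (ω * z).re - c := fun z => by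
      rw [mul_sub, hωa]; simp
    have him : ∀ z, (ω * (z - a)).im = (ω * z).im - e.1 := fun z => by
      rw [mul_sub, hωa]; simp
    have hne : ∀ z ∈ X, ω * (z - a) ≠ 0 := fun z hz =>
      mul_ne_zero hω (sub_ne_zero.2 fun h => haX (h ▸ hz))
    have s1 : ∀ z ∈ X ∩ B1, -ω * (z - a) ∈ Complex.slitPlane := fun z hz => by
      apply mem_slit_of_re_nonneg
      · rw [neg_mul, Complex.neg_re, hre]; linarith [h1 z hz.2]
      · rw [neg_mul]; exact neg_ne_zero.2 (hne z hz.1)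
    have s2 : ∀ z ∈ X ∩ B2, ω * (z - a) ∈ Complex.slitPlane := fun z hz => by
      apply mem_slit_of_re_nonneg
      · rw [hre]; linarith [h2 z hz.2]
      · exact hne z hz.1
    refine ⟨fun z => e.2 * (Complex.log (-ω * (z - a)) - Complex.log (-ω)) + u z,
      fun z => e.2 * (Complex.log (ω * (z - a)) - Complex.log ω) + v z,
      e.2 * (Complex.log ω - Complex.log (-ω) + Real.pi * Complex.I) + κ, ?_, ?_, ?_, ?_, ?_⟩
    · refine (continuousOn_const.mul (ContinuousOn.sub (ContinuousOn.clog ?_ s1)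
        continuousOn_const)).add hu
      fun_prop
    · refine (continuousOn_const.mul (ContinuousOn.sub (ContinuousOn.clog ?_ s2)
        continuousOn_const)).add hv
      fun_prop
    · intro z hz
      rw [Complex.exp_add, Complex.exp_int_mul, Complex.exp_sub,
        Complex.exp_log (Complex.slitPlane_ne_zero (s1 z hz)), Complex.exp_log (neg_ne_zero.2 hω),
        hu' z hz, mul_div_cancel_left₀ _ (neg_ne_zero.2 hω)]
      simp [ratProd, ← ha]
    · intro z hz
      rw [Complex.exp_add, Complex.exp_int_mul, Complex.exp_sub,
        Complex.exp_log (Complex.slitPlane_ne_zero (s2 z hz)), Complex.exp_log hω,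
        hv' z hz, mul_div_cancel_left₀ _ hω]
      simp [ratProd, ← ha]
    · rintro z ⟨hzX, hz1, hz2⟩
      have hc : (ω * z).re = c := le_antisymm (h1 z hz1) (h2 z hz2)
      have hval : ω * (z - a) = ((ω * z).im - e.1 : ℝ) * Complex.I := by
        apply Complex.ext
        · rw [hre, hc]; simp
        · rw [him]; simp
      have hj : jump (e :: l) (ω * z).im = (if e.1 < (ω * z).im then e.2 else 0)
        + jump l (ω * z).im := by simp [jump]
      have hne' := hne z hzX
      have hlog : Complex.log (-ω * (z - a)) - Complex.log (ω * (z - a)) =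
          Real.pi * Complex.I - 2 * Real.pi * Complex.I * (if e.1 < (ω * z).im then 1 else 0) := by
        rw [neg_mul, hval]
        have hr : (ω * z).im - e.1 ≠ 0 := fun h => hne' (by rw [hval, h]; simp)
        generalize hrr : (ω * z).im - e.1 = r at hr
        rcases lt_or_gt_of_ne hr with h | h
        · rw [if_neg (by linarith)]
          have e1 : -((r : ℂ) * Complex.I) = ((-r : ℝ) : ℂ) * Complex.I := by push_cast; ring
          have e2 : ((r : ℂ) * Complex.I) = ((-r : ℝ) : ℂ) * (-Complex.I) := by push_cast; ring
          rw [e1, e2, Complex.log_ofReal_mul (by linarith) Complex.I_ne_zero,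
            Complex.log_ofReal_mul (by linarith) (neg_ne_zero.2 Complex.I_ne_zero),
            Complex.log_I, Complex.log_neg_I]
          ring
        · rw [if_pos (by linarith)]
          have e1 : -((r : ℂ) * Complex.I) = (r : ℂ) * (-Complex.I) := by ring
          rw [e1, Complex.log_ofReal_mul h Complex.I_ne_zero,
            Complex.log_ofReal_mul h (neg_ne_zero.2 Complex.I_ne_zero),
            Complex.log_I, Complex.log_neg_I]
          ring
      have huv' := huv z ⟨hzX, hz1, hz2⟩
      rw [hj]
      have : (((if e.1 < (ω * z).im then e.2 else 0) + jump l (ω * z).im : ℤ) : ℂ) =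
        e.2 * (if e.1 < (ω * z).im then 1 else 0) + jump l (ω * z).im := by
        split_ifs <;> simp
      rw [this]
      linear_combination huv' + e.2 * hlog

/-- Logarithms up to rational functions on two closed sets `B1`, `B2`, which lie on opposite sides
of the line `Re (ω z) = c` and meet it in the same segment, can be glued. Along `X` in that segment
the two logarithms differ by a locally constant integer multiple of `2πi`; its jumps happen at
points of the segment off `X`, and factors `(z - a) ^ n` at such points compensate for them. -/
lemma LogModRat.merge {X B1 B2 : Set ℂ} {h : ℂ → ℂ} (hX : IsCompact X) (ω : ℂ) (hω : ω ≠ 0)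
    (c p q : ℝ) (hpq : p ≤ q)
    (hB1 : IsClosed B1) (hB2 : IsClosed B2)
    (h1 : ∀ z ∈ B1, (ω * z).re ≤ c) (h2 : ∀ z ∈ B2, c ≤ (ω * z).re)
    (hs1 : ∀ z, (ω * z).re = c → (z ∈ B1 ↔ (ω * z).im ∈ Icc p q))
    (hs2 : ∀ z, (ω * z).re = c → (z ∈ B2 ↔ (ω * z).im ∈ Icc p q))
    (r1 : LogModRat X B1 h) (r2 : LogModRat X B2 h) : LogModRat X (B1 ∪ B2) h := by
  obtain ⟨l1, hl1, u1, hu1, hu1'⟩ := r1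
  obtain ⟨l2, hl2, u2, hu2, hu2'⟩ := r2
  have hr2 : HasLog (X ∩ B1) (ratProd l2) := HasLog.ratProd _ fun a ha =>
    HasLog.of_slit (-ω) (neg_ne_zero.2 hω) (by fun_prop) fun z hz => by
      apply mem_slit_of_re_nonneg
      · rw [neg_mul, Complex.neg_re, mul_sub, Complex.sub_re]
        linarith [h1 z hz.2, h2 _ (hl2 a ha).1]
      · exact mul_ne_zero (neg_ne_zero.2 hω) (sub_ne_zero.2 fun h => (hl2 a ha).2 (h ▸ hz.1))
  have hr1 : HasLog (X ∩ B2) (ratProd l1) := HasLog.ratProd _ fun a ha =>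
    HasLog.of_slit ω hω (by fun_prop) fun z hz => by
      apply mem_slit_of_re_nonneg
      · rw [mul_sub, Complex.sub_re]
        linarith [h2 z hz.2, h1 _ (hl1 a ha).1]
      · exact mul_ne_zero hω (sub_ne_zero.2 fun h => (hl1 a ha).2 (h ▸ hz.1))
  obtain ⟨v1, hv1, hv1'⟩ := hr1
  obtain ⟨v2, hv2, hv2'⟩ := hr2
  -- the integer mismatch along the line
  have hE : IsCompact (X ∩ (B1 ∩ B2)) := hX.inter_right (hB1.inter hB2)
  have hD : ContinuousOn (fun z => (u1 z + v2 z) - (u2 z + v1 z)) (X ∩ (B1 ∩ B2)) :=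
    ((hu1.add hv2).mono fun z hz => ⟨hz.1, hz.2.1⟩).sub
      ((hu2.add hv1).mono fun z hz => ⟨hz.1, hz.2.2⟩)
  have hInt : ∀ z, ∃ k : ℤ, z ∈ X ∩ (B1 ∩ B2) →
      (u1 z + v2 z) - (u2 z + v1 z) = k * (2 * Real.pi * Complex.I) := by
    intro z
    by_cases hz : z ∈ X ∩ (B1 ∩ B2)
    · have : Complex.exp (u1 z + v2 z) = Complex.exp (u2 z + v1 z) := by
        rw [Complex.exp_add, Complex.exp_add, hu1' z ⟨hz.1, hz.2.1⟩, hu2' z ⟨hz.1, hz.2.2⟩,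
          hv1' z ⟨hz.1, hz.2.2⟩, hv2' z ⟨hz.1, hz.2.1⟩]
        ring
      obtain ⟨k, hk⟩ := Complex.exp_eq_exp_iff_exists_int.1 this
      exact ⟨k, fun _ => by rw [hk]; ring⟩
    · exact ⟨0, fun h => (hz h).elim⟩
  choose k hk using hInt
  have huc := hE.uniformContinuousOn_of_continuous hD
  rw [Metric.uniformContinuousOn_iff] at huc
  obtain ⟨δ, hδ, hδ'⟩ := huc 1 one_pos
  set pt : ℝ → ℂ := fun s => ω⁻¹ * (c + s * Complex.I) with hpt
  have hωpt : ∀ s, ω * pt s = c + s * Complex.I := fun s => by simp only [hpt]; field_simp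
  have hptz : ∀ z, (ω * z).re = c → pt (ω * z).im = z := fun z hz => by
    apply mul_left_cancel₀ hω
    rw [hωpt]
    apply Complex.ext <;> simp
    simpa using hz.symm
  have hptd : ∀ s s', dist (pt s) (pt s') = ‖ω‖⁻¹ * |s - s'| := fun s s' => by
    rw [dist_eq_norm]; simp only [hpt]
    rw [← mul_sub, norm_mul, norm_inv, add_sub_add_left_eq_sub, ← sub_mul, norm_mul,
      Complex.norm_I, mul_one, ← Complex.ofReal_sub, Complex.norm_real, Real.norm_eq_abs]
  have hωn : 0 < ‖ω‖ := norm_pos_iff.2 hω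
  -- on the compact part of `X` in the segment, the mismatch is a step function
  obtain ⟨l, m0, hl, hl'⟩ := exists_jump {s | pt s ∈ X ∩ (B1 ∩ B2)} (fun s => k (pt s))
    (‖ω‖ * (δ / 2)) (by positivity) (by
      intro s hs s' hs' hss
      have hd : dist (pt s) (pt s') < δ := by
        rw [hptd]
        calc ‖ω‖⁻¹ * |s - s'| ≤ ‖ω‖⁻¹ * (‖ω‖ * (δ / 2)) := by gcongr
          _ = δ / 2 := by field_simp
          _ < δ := by linarith
      have h3 := hδ' _ hs _ hs' hd
      rw [hk _ hs, hk _ hs', dist_eq_norm, ← sub_mul, norm_mul, ← Int.cast_sub,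
        Complex.norm_intCast] at h3
      have hpi : (1 : ℝ) < ‖(2 * Real.pi * Complex.I : ℂ)‖ := by
        simp [abs_of_pos Real.pi_pos]
        linarith [Real.pi_gt_three]
      by_contra hne
      have : (1 : ℝ) ≤ |((k (pt s) - k (pt s') : ℤ) : ℝ)| := by
        exact_mod_cast Int.one_le_abs (sub_ne_zero.2 hne)
      nlinarith) p q hpq
  have hmemB : ∀ e ∈ l, pt e.1 ∈ B1 ∧ pt e.1 ∈ B2 := fun e he => by
    have hre : (ω * pt e.1).re = c := by rw [hωpt]; simp
    have him : (ω * pt e.1).im = e.1 := by rw [hωpt]; simp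
    exact ⟨(hs1 _ hre).2 (by rw [him]; exact (hl e he).1),
      (hs2 _ hre).2 (by rw [him]; exact (hl e he).1)⟩
  have hnX : ∀ e ∈ l, pt e.1 ∉ X := fun e he h => (hl e he).2 ⟨h, hmemB e he⟩
  obtain ⟨u, v, κ, hu, hv, hu', hv', huv⟩ := two_logs X B1 B2 ω hω c h1 h2 l hnX
  set l3 := l.map fun e => (pt e.1, e.2) with hl3
  set w1 : ℂ → ℂ := fun z => u1 z + v2 z + u z with hw1
  set w2 : ℂ → ℂ := fun z => u2 z + v1 z + v z with hw2
  have hw1c : ContinuousOn w1 (X ∩ B1) := (hu1.add hv2).add hu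
  have hw2c : ContinuousOn w2 (X ∩ B2) := (hu2.add hv1).add hv
  have hw1e : ∀ z ∈ X ∩ B1, Complex.exp (w1 z) = h z * ratProd (l1 ++ l2 ++ l3) z := fun z hz => by
    rw [hw1, Complex.exp_add, Complex.exp_add, hu1' z hz, hv2' z hz, hu' z hz, ratProd_append,
      ratProd_append]
    ring
  have hw2e : ∀ z ∈ X ∩ B2, Complex.exp (w2 z) = h z * ratProd (l1 ++ l2 ++ l3) z := fun z hz => by
    rw [hw2, Complex.exp_add, Complex.exp_add, hu2' z hz, hv1' z hz, hv' z hz, ratProd_append,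
      ratProd_append]
    ring
  have hdiff : ∃ C : ℂ, Complex.exp C = 1 ∧ ∀ z ∈ X ∩ (B1 ∩ B2), w1 z = w2 z + C := by
    have hconst : ∀ z ∈ X ∩ (B1 ∩ B2), w1 z = w2 z + (m0 * (2 * Real.pi * Complex.I) + κ) := by
      intro z hz
      have hre : (ω * z).re = c := le_antisymm (h1 z hz.2.1) (h2 z hz.2.2)
      have h4 := hl' (ω * z).im ⟨by
        change pt _ ∈ X ∩ (B1 ∩ B2); rw [hptz z hre]; exact hz, (hs1 z hre).1 hz.2.1⟩
      rw [hptz z hre] at h4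
      have h5 := hk z hz
      rw [h4] at h5
      push_cast at h5
      have h6 := huv z hz
      simp only [hw1, hw2]
      linear_combination h5 + h6
    by_cases hne : (X ∩ (B1 ∩ B2)).Nonempty
    · obtain ⟨z, hz⟩ := hne
      refine ⟨_, ?_, hconst⟩
      have h5 := hw1e z ⟨hz.1, hz.2.1⟩
      rw [hconst z hz, Complex.exp_add, ← hw2e z ⟨hz.1, hz.2.2⟩] at h5
      exact mul_left_cancel₀ (Complex.exp_ne_zero _) (by rw [h5, mul_one])
    · exact ⟨0, Complex.exp_zero, fun z hz => (hne ⟨z, hz⟩).elim⟩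
  obtain ⟨C, hC, hC'⟩ := hdiff
  refine ⟨l1 ++ l2 ++ l3, ?_, ?_⟩
  · intro a ha
    rcases List.mem_append.1 ha with ha | ha
    · rcases List.mem_append.1 ha with ha | ha
      · exact ⟨Or.inl (hl1 a ha).1, (hl1 a ha).2⟩
      · exact ⟨Or.inr (hl2 a ha).1, (hl2 a ha).2⟩
    · rw [hl3, List.mem_map] at ha
      obtain ⟨e, he, rfl⟩ := ha
      exact ⟨Or.inl (hmemB e he).1, hnX e he⟩
  · classical
    refine ⟨fun z => if z ∈ B1 then w1 z else w2 z + C, ?_, ?_⟩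
    · rw [inter_union_distrib_left]
      refine ContinuousOn.union_of_isClosed ?_ ?_ (hX.isClosed.inter hB1) (hX.isClosed.inter hB2)
      · exact hw1c.congr fun z hz => if_pos hz.2
      · refine (hw2c.add (continuousOn_const (c := C))).congr fun z hz => ?_
        by_cases hz1 : z ∈ B1
        · rw [if_pos hz1]; exact hC' z ⟨hz.1, hz1, hz.2⟩
        · rw [if_neg hz1]; rfl
    · rintro z ⟨hzX, hz⟩
      by_cases hz1 : z ∈ B1
      · simp only [if_pos hz1]; exact hw1e z ⟨hzX, hz1⟩
      · simp only [if_neg hz1]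
        rw [Complex.exp_add, hC, mul_one]
        exact hw2e z ⟨hzX, hz.resolve_left hz1⟩

/-- The closed rectangle `[a, b] × [p, q]`. -/
def rect (a b p q : ℝ) : Set ℂ := {z | z.re ∈ Icc a b ∧ z.im ∈ Icc p q}

lemma isClosed_rect (a b p q : ℝ) : IsClosed (rect a b p q) :=
  (isClosed_Icc.preimage Complex.continuous_re).inter (isClosed_Icc.preimage Complex.continuous_im)

/-- Every nonvanishing continuous function on a plane compactum is, up to a rational function with
zeros and poles off the compactum, an exponential. -/
lemma exists_log_mod_rat {X : Set ℂ} {h : ℂ → ℂ} (hX : IsCompact X) (hc : ContinuousOn h X)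
    (h0 : ∀ z ∈ X, h z ≠ 0) :
    ∃ l : List (ℂ × ℤ), (∀ a ∈ l, a.1 ∉ X) ∧ HasLog X (fun z => h z * ratProd l z) := by
  obtain ⟨ε, hε, hε'⟩ : ∃ ε > 0, ∀ z ∈ X, ε ≤ ‖h z‖ := by
    rcases X.eq_empty_or_nonempty with rfl | hne
    · exact ⟨1, one_pos, by simp⟩
    · obtain ⟨z0, hz0, hmin⟩ := hX.exists_isMinOn hne hc.norm
      exact ⟨‖h z0‖, norm_pos_iff.2 (h0 z0 hz0), fun z hz => hmin hz⟩
  have huc := hX.uniformContinuousOn_of_continuous hc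
  rw [Metric.uniformContinuousOn_iff] at huc
  obtain ⟨δ, hδ, hδ'⟩ := huc ε hε
  -- on rectangles of small size `h` stays in a half-plane, so no rational factor is needed
  have small : ∀ a b p q : ℝ, a ≤ b → p ≤ q → b - a ≤ δ / 3 → q - p ≤ δ / 3 →
      LogModRat X (rect a b p q) h := by
    intro a b p q hab hpq h1 h2
    refine ⟨[], by simp, ?_⟩
    have : HasLog (X ∩ rect a b p q) h := by
      by_cases hne : (X ∩ rect a b p q).Nonempty
      · obtain ⟨z0, hz0⟩ := hne
        have hn0 := h0 z0 hz0.1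
        refine HasLog.of_slit (h z0)⁻¹ (inv_ne_zero hn0) (hc.mono inter_subset_left) fun z hz => ?_
        apply Complex.ball_one_subset_slitPlane
        have hd : dist z z0 < δ := by
          rw [dist_eq_norm]
          refine (Complex.norm_le_abs_re_add_abs_im _).trans_lt ?_
          have e1 : |(z - z0).re| ≤ δ / 3 := by
            rw [Complex.sub_re, abs_le]
            constructor <;> linarith [hz.2.1.1, hz.2.1.2, hz0.2.1.1, hz0.2.1.2]
          have e2 : |(z - z0).im| ≤ δ / 3 := by
            rw [Complex.sub_im, abs_le]
            constructor <;> linarith [hz.2.2.1, hz.2.2.2, hz0.2.2.1, hz0.2.2.2]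
          linarith
        have h3 := hδ' z hz.1 z0 hz0.1 hd
        rw [mem_ball, dist_eq_norm]
        have : (h z0)⁻¹ * h z - 1 = (h z0)⁻¹ * (h z - h z0) := by field_simp
        rw [this, norm_mul, norm_inv, inv_mul_lt_iff₀ (norm_pos_iff.2 hn0), mul_one, ← dist_eq_norm]
        exact h3.trans_le (hε' z0 hz0.1)
      · exact ⟨fun _ => 0, continuousOn_const, fun z hz => (hne ⟨z, hz⟩).elim⟩
    exact this.congr fun z _ => by simp [ratProd]
  have strips : ∀ a b : ℝ, a ≤ b → b - a ≤ δ / 3 → ∀ p q, p ≤ q →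
      LogModRat X (rect a b p q) h := by
    intro a b hab h1
    refine interval_induction (fun p q => LogModRat X (rect a b p q) h) ?_ (δ / 3) (by positivity)
      fun p q hpq h2 => small a b p q hab hpq h1 h2
    intro p q r hpq hqr r1 r2
    have hre : ∀ z : ℂ, (-Complex.I * z).re = z.im := fun z => by simp
    have him : ∀ z : ℂ, (-Complex.I * z).im = -z.re := fun z => by simp
    have := LogModRat.merge hX (-Complex.I) (neg_ne_zero.2 Complex.I_ne_zero) q (-b) (-a)
      (by linarith) (isClosed_rect a b p q) (isClosed_rect a b q r)
      (fun z hz => by rw [hre]; exact hz.2.2) (fun z hz => by rw [hre]; exact hz.2.1)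
      (fun z hz => by
        rw [hre] at hz; rw [him]
        simp only [rect, mem_ofPred_eq, mem_Icc]
        constructor
        · rintro ⟨⟨_, _⟩, _, _⟩; constructor <;> linarith
        · rintro ⟨_, _⟩; refine ⟨⟨?_, ?_⟩, ?_, ?_⟩ <;> linarith)
      (fun z hz => by
        rw [hre] at hz; rw [him]
        simp only [rect, mem_ofPred_eq, mem_Icc]
        constructor
        · rintro ⟨⟨_, _⟩, _, _⟩; constructor <;> linarith
        · rintro ⟨_, _⟩; refine ⟨⟨?_, ?_⟩, ?_, ?_⟩ <;> linarith) r1 r2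
    have e : rect a b p q ∪ rect a b q r = rect a b p r := by
      rw [rect, rect, rect, ← Icc_union_Icc_eq_Icc hpq hqr]
      ext z; simp only [mem_union, mem_ofPred_eq]; tauto
    rwa [e] at this
  have all : ∀ p q, p ≤ q → ∀ a b, a ≤ b → LogModRat X (rect a b p q) h := by
    intro p q hpq
    refine interval_induction (fun a b => LogModRat X (rect a b p q) h) ?_ (δ / 3) (by positivity)
      fun a b hab h1 => strips a b hab h1 p q hpq
    intro a b c hab hbc r1 r2
    have := LogModRat.merge hX 1 one_ne_zero b p q
      hpq (isClosed_rect a b p q) (isClosed_rect b c p q)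
      (fun z hz => by rw [one_mul]; exact hz.1.2) (fun z hz => by rw [one_mul]; exact hz.1.1)
      (fun z hz => by
        rw [one_mul] at hz ⊢
        simp only [rect, mem_ofPred_eq, mem_Icc]
        constructor
        · rintro ⟨⟨_, _⟩, _, _⟩; constructor <;> linarith
        · rintro ⟨_, _⟩; refine ⟨⟨?_, ?_⟩, ?_, ?_⟩ <;> linarith)
      (fun z hz => by
        rw [one_mul] at hz ⊢
        simp only [rect, mem_ofPred_eq, mem_Icc]
        constructor
        · rintro ⟨⟨_, _⟩, _, _⟩; constructor <;> linarith
        · rintro ⟨_, _⟩; refine ⟨⟨?_, ?_⟩, ?_, ?_⟩ <;> linarith) r1 r2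
    have e : rect a b p q ∪ rect b c p q = rect a c p q := by
      rw [rect, rect, rect, ← Icc_union_Icc_eq_Icc hab hbc]
      ext z; simp only [mem_union, mem_ofPred_eq]; tauto
    rwa [e] at this
  obtain ⟨M, hM⟩ := hX.isBounded.exists_norm_le
  have hM' : ∀ z ∈ X, z ∈ rect (-|M|) |M| (-|M|) |M| := fun z hz => by
    have h1 := (hM z hz).trans (le_abs_self M)
    exact ⟨abs_le.1 ((Complex.abs_re_le_norm z).trans h1),
      abs_le.1 ((Complex.abs_im_le_norm z).trans h1)⟩
  have hM0 : -|M| ≤ |M| := by linarith [abs_nonneg M]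
  obtain ⟨l, hl, hlog⟩ := all _ _ hM0 _ _ hM0
  rw [inter_eq_left.2 hM'] at hlog
  exact ⟨l, fun a ha => (hl a ha).2, hlog⟩

/-- Borsuk's theorem, in the form used below: if no point off the compactum `X` is linked with `X`,
then all nonvanishing continuous functions on `X` have logarithms. -/
lemma hasLog_of_forall {X : Set ℂ} {h : ℂ → ℂ} (hX : IsCompact X) (hc : ContinuousOn h X)
    (h0 : ∀ z ∈ X, h z ≠ 0) (H : ∀ a ∉ X, HasLog X (fun z => z - a)) : HasLog X h := by
  obtain ⟨l, hl, hlog⟩ := exists_log_mod_rat hX hc h0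
  have hr : HasLog X (ratProd l) := HasLog.ratProd l fun a ha => H a.1 (hl a ha)
  refine (hlog.mul (hr.zpow (-1))).congr fun z hz => ?_
  have : ratProd l z ≠ 0 := by
    intro h
    rw [ratProd, List.prod_eq_zero_iff] at h
    obtain ⟨a, ha, ha'⟩ := List.mem_map.1 h
    exact hl a ha (by rw [← sub_eq_zero.1 (eq_zero_of_zpow_eq_zero ha')] ; exact hz)
  rw [zpow_neg_one]; field_simp

/-- A continuous logarithm of `1` is constant on connected sets. -/
lemma const_of_exp_eq_one {S : Set ℂ} (hS : IsPreconnected S) {w : ℂ → ℂ} (hw : ContinuousOn w S)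
    (h : ∀ z ∈ S, Complex.exp (w z) = 1) : ∀ z ∈ S, ∀ z' ∈ S, w z = w z' := by
  intro z hz z' hz'
  have hk : ∀ z ∈ S, ∃ k : ℤ, w z = k * (2 * Real.pi * Complex.I) := fun z hz =>
    Complex.exp_eq_one_iff.1 (h z hz)
  have him : IsPreconnected ((fun z => (w z).im / (2 * Real.pi)) '' S) :=
    hS.image _ ((Complex.continuous_im.comp_continuousOn hw).div_const _)
  have hval : ∀ z ∈ S, ∃ k : ℤ, w z = k * (2 * Real.pi * Complex.I) ∧
      (w z).im / (2 * Real.pi) = k := fun z hz => by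
    obtain ⟨k, hk⟩ := hk z hz
    refine ⟨k, hk, ?_⟩
    rw [hk]; simp
  obtain ⟨k, hk1, hk2⟩ := hval z hz
  obtain ⟨k', hk1', hk2'⟩ := hval z' hz'
  have hoc : ∀ a b : ℤ, (∃ z ∈ S, (w z).im / (2 * Real.pi) = a) →
      (∃ z ∈ S, (w z).im / (2 * Real.pi) = b) → a < b → False := by
    rintro a b ⟨y, hy, ha⟩ ⟨y', hy', hb⟩ hab
    have hab' : (a : ℝ) + 1 ≤ b := by exact_mod_cast hab
    have := him.ordConnected.out ⟨y, hy, rfl⟩ ⟨y', hy', rfl⟩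
    have hm : (a : ℝ) + 1 / 2 ∈ Icc ((w y).im / (2 * Real.pi)) ((w y').im / (2 * Real.pi)) := by
      rw [ha, hb]; constructor <;> linarith
    obtain ⟨x, hx, hx'⟩ := this hm
    obtain ⟨j, -, hj⟩ := hval x hx
    simp only [hj] at hx'
    have h2 : (2 * j : ℤ) = 2 * a + 1 := by
      have : (2 * j : ℝ) = 2 * a + 1 := by linarith
      exact_mod_cast this
    omega
  have : k = k' := by
    rcases lt_trichotomy k k' with h | h | h
    · exact (hoc _ _ ⟨z, hz, hk2⟩ ⟨z', hz', hk2'⟩ h).elim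
    · exact h
    · exact (hoc _ _ ⟨z', hz', hk2'⟩ ⟨z, hz, hk2⟩ h).elim
  rw [hk1, hk1', this]

/-- Janiszewski's theorem in the plane, analytic half: if two continua meet in a disconnected set,
then some point off their union is linked with it. -/
lemma exists_not_hasLog {F L : Set ℂ} (hF : IsCompact F) (hL : IsCompact L)
    (hFc : IsPreconnected F) (hLc : IsPreconnected L) (h : ¬ IsPreconnected (F ∩ L)) :
    ∃ a ∉ F ∪ L, ¬ HasLog (F ∪ L) (fun z => z - a) := by
  classical
  by_contra! H
  apply h
  have hcl : IsClosed (F ∩ L) := hF.isClosed.inter hL.isClosed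
  rw [isPreconnected_iff_subset_of_disjoint_closed]
  intro P Q hP hQ hPQ hdis
  by_contra! hno
  obtain ⟨⟨q, hqFL, hqP⟩, ⟨p, hpFL, hpQ⟩⟩ :=
    (⟨not_subset.1 hno.1, not_subset.1 hno.2⟩ : (_ ∧ _))
  have hq : q ∈ Q := (hPQ hqFL).resolve_left hqP
  have hp : p ∈ P := (hPQ hpFL).resolve_right hpQ
  obtain ⟨θ, h0, h1, -⟩ := exists_continuous_zero_one_of_isClosed (hcl.inter hP) (hcl.inter hQ)
    (by
      rw [Set.disjoint_left]
      intro x hx hx'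
      have : x ∈ F ∩ L ∩ (P ∩ Q) := ⟨hx.1, hx.2, hx'.2⟩
      rw [hdis] at this; exact this)
  -- `h` is `1` on `F` and winds once around `0` on `L` between the two parts of `F ∩ L`
  set h : ℂ → ℂ := fun z => if z ∈ F then 1 else Complex.exp (2 * Real.pi * Complex.I * (θ z : ℝ))
  have hhF : ∀ z ∈ F, h z = 1 := fun z hz => if_pos hz
  have hhL : ∀ z ∈ L, h z = Complex.exp (2 * Real.pi * Complex.I * (θ z : ℝ)) := fun z hz => by
    by_cases hzF : z ∈ F
    · rw [hhF z hzF]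
      rcases hPQ ⟨hzF, hz⟩ with hz' | hz'
      · rw [h0 ⟨⟨hzF, hz⟩, hz'⟩]; simp
      · rw [h1 ⟨⟨hzF, hz⟩, hz'⟩]; simp
    · exact if_neg hzF
  have hθc : Continuous fun z => 2 * Real.pi * Complex.I * ((θ z : ℝ) : ℂ) := by fun_prop
  have hcont : ContinuousOn h (F ∪ L) := by
    refine ContinuousOn.union_of_isClosed ?_ ?_ hF.isClosed hL.isClosed
    · exact continuousOn_const.congr hhF
    · exact (Complex.continuous_exp.comp hθc).continuousOn.congr hhL
  obtain ⟨u, hu, hu'⟩ := hasLog_of_forall (hF.union hL) hcont (by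
    rintro z (hz | hz)
    · rw [hhF z hz]; exact one_ne_zero
    · rw [hhL z hz]; exact Complex.exp_ne_zero _) H
  have e1 := const_of_exp_eq_one hFc (hu.mono subset_union_left)
    (fun z hz => by rw [hu' z (Or.inl hz), hhF z hz]) p hpFL.1 q hqFL.1
  have e2 := const_of_exp_eq_one hLc
    (w := fun z => u z - 2 * Real.pi * Complex.I * ((θ z : ℝ) : ℂ))
    ((hu.mono subset_union_right).sub hθc.continuousOn)
    (fun z hz => by
      rw [Complex.exp_sub, hu' z (Or.inr hz), hhL z hz, div_self (Complex.exp_ne_zero _)])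
    p hpFL.2 q hqFL.2
  simp only [h0 ⟨hpFL, hp⟩, h1 ⟨hqFL, hq⟩, e1] at e2
  have : (2 * Real.pi * Complex.I : ℂ) = 0 := by
    simp at e2
    linear_combination e2
  exact Complex.two_pi_I_ne_zero this

/-! ### Janiszewski's theorem on the sphere -/

/-- Stereographic projection from `r`, as a pair of inverse maps. -/
lemma exists_stereographic (r : S2) : ∃ (Φ : S2 → ℂ) (Ψ : ℂ → S2), ContinuousOn Φ {r}ᶜ ∧
    Continuous Ψ ∧ (∀ z, Ψ z ≠ r) ∧ (∀ z, Φ (Ψ z) = z) ∧ ∀ x, x ≠ r → Ψ (Φ x) = x := by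
  have : Fact (Module.finrank ℝ (EuclideanSpace ℝ (Fin 3)) = 2 + 1) := ⟨by simp⟩
  set e := stereographic' 2 r with he
  set T := Complex.orthonormalBasisOneI.repr with hT
  have hs : e.source = {r}ᶜ := stereographic'_source r
  have ht : e.target = univ := stereographic'_target r
  refine ⟨fun x => T.symm (e x), fun z => e.symm (T z), ?_, ?_, ?_, ?_, ?_⟩
  · exact T.symm.continuous.comp_continuousOn (hs ▸ e.continuousOn)
  · have := e.continuousOn_symm
    rw [ht, continuousOn_univ] at this
    exact this.comp T.continuous
  · intro z
    have : e.symm (T z) ∈ e.source := e.map_target (by rw [ht]; trivial)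
    rw [hs] at this; exact this
  · intro z
    simp only
    rw [e.right_inv (by rw [ht]; trivial), T.symm_apply_apply]
  · intro x hx
    simp only
    rw [T.apply_symm_apply, e.left_inv (by rw [hs]; exact hx)]

/-- Whether `z - a` has a logarithm does not change when `a` moves by less than its distance to
`X`. -/
lemma HasLog.shift {X : Set ℂ} {a b : ℂ} (h : ∀ z ∈ X, ‖a - b‖ < ‖z - a‖)
    (ha : HasLog X (fun z => z - a)) : HasLog X (fun z => z - b) := by
  have h0 : ∀ z ∈ X, z - a ≠ 0 := fun z hz =>
    norm_pos_iff.1 ((norm_nonneg _).trans_lt (h z hz))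
  have hq : HasLog X (fun z => (z - b) / (z - a)) := by
    refine HasLog.of_slit 1 one_ne_zero (ContinuousOn.div (by fun_prop) (by fun_prop) h0) ?_
    intro z hz
    apply Complex.ball_one_subset_slitPlane
    have := h0 z hz
    rw [mem_ball, dist_eq_norm, one_mul, show (z - b) / (z - a) - 1 = (a - b) / (z - a) by
      field_simp; ring, norm_div, div_lt_one (norm_pos_iff.2 this)]
    exact h z hz
  refine (ha.mul hq).congr fun z hz => ?_
  have := h0 z hz
  field_simp

lemma HasLog.of_large {X : Set ℂ} {a : ℂ} (h : ∀ z ∈ X, ‖z‖ < ‖a‖) :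
    HasLog X (fun z => z - a) := by
  by_cases h0 : a = 0
  · subst h0
    exact ⟨fun _ => 0, continuousOn_const, fun z hz =>
      absurd (h z hz) (by simp)⟩
  refine HasLog.of_slit (-a)⁻¹ (inv_ne_zero (neg_ne_zero.2 h0)) (by fun_prop) fun z hz => ?_
  apply Complex.ball_one_subset_slitPlane
  rw [mem_ball, dist_eq_norm, show (-a)⁻¹ * (z - a) - 1 = -(z / a) by field_simp; ring,
    norm_neg, norm_div, div_lt_one (norm_pos_iff.2 h0)]
  exact h z hz

lemma eps_far {X : Set ℂ} (hX : IsCompact X) {a : ℂ} (ha : a ∉ X) :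
    ∃ ε > 0, ∀ z ∈ X, ε ≤ ‖z - a‖ := by
  obtain ⟨ε, hε, h⟩ := Metric.isOpen_iff.1 hX.isClosed.isOpen_compl a ha
  refine ⟨ε, hε, fun z hz => ?_⟩
  by_contra! hlt
  exact h (by rwa [mem_ball, dist_eq_norm]) hz

/-- The points off `X` at which `z - a` has a logarithm on `X`, and those at which it has none,
form open sets. -/
lemma isOpen_linked {X : Set ℂ} (hX : IsCompact X) :
    IsOpen {a | a ∉ X ∧ HasLog X (fun z => z - a)} ∧
      IsOpen {a | a ∉ X ∧ ¬ HasLog X (fun z => z - a)} := by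
  constructor
  · rw [Metric.isOpen_iff]
    rintro a ⟨ha, hl⟩
    obtain ⟨ε, hε, h⟩ := eps_far hX ha
    refine ⟨ε, hε, fun b hb => ?_⟩
    rw [mem_ball, dist_comm, dist_eq_norm] at hb
    refine ⟨fun hbX => ?_, hl.shift fun z hz => hb.trans_le (h z hz)⟩
    have := h b hbX
    rw [norm_sub_rev] at this; linarith
  · rw [Metric.isOpen_iff]
    rintro a ⟨ha, hl⟩
    obtain ⟨ε, hε, h⟩ := eps_far hX ha
    refine ⟨ε / 2, half_pos hε, fun b hb => ?_⟩
    rw [mem_ball, dist_eq_norm] at hb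
    refine ⟨fun hbX => ?_, fun hbl => hl (hbl.shift fun z hz => ?_)⟩
    · have := h b hbX
      linarith
    · have h1 := h z hz
      have h2 : ‖z - a‖ ≤ ‖z - b‖ + ‖b - a‖ := by
        simpa using norm_add_le (z - b) (b - a)
      linarith

/-- Janiszewski's theorem on the sphere: if two continua meet in a disconnected set, their union
separates the sphere. -/
lemma janiszewski {F L : Set S2} (hF : IsCompact F) (hL : IsCompact L) (hFc : IsPreconnected F)
    (hLc : IsPreconnected L) {r : S2} (hr : r ∉ F ∪ L) (h : ¬ IsPreconnected (F ∩ L)) :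
    ¬ IsPreconnected (F ∪ L)ᶜ := by
  obtain ⟨Φ, Ψ, hΦ, hΨ, hΨr, hΦΨ, hΨΦ⟩ := exists_stereographic r
  have sF : F ⊆ {r}ᶜ := fun x hx hxr => hr (Or.inl (mem_singleton_iff.1 hxr ▸ hx))
  have sL : L ⊆ {r}ᶜ := fun x hx hxr => hr (Or.inr (mem_singleton_iff.1 hxr ▸ hx))
  have hF' : IsCompact (Φ '' F) := hF.image_of_continuousOn (hΦ.mono sF)
  have hL' : IsCompact (Φ '' L) := hL.image_of_continuousOn (hΦ.mono sL)
  have hinter : Ψ '' (Φ '' F ∩ Φ '' L) = F ∩ L := by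
    ext x
    constructor
    · rintro ⟨z, ⟨⟨y, hy, rfl⟩, ⟨y', hy', h2⟩⟩, rfl⟩
      have : Ψ (Φ y') = Ψ (Φ y) := by rw [h2]
      rw [hΨΦ y' (sL hy'), hΨΦ y (sF hy)] at this
      rw [hΨΦ y (sF hy)]
      exact ⟨hy, this ▸ hy'⟩
    · rintro ⟨h1, h2⟩
      exact ⟨Φ x, ⟨⟨x, h1, rfl⟩, ⟨x, h2, rfl⟩⟩, hΨΦ x (sF h1)⟩
  obtain ⟨a, haX, ha⟩ := exists_not_hasLog hF' hL' (hFc.image _ (hΦ.mono sF))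
    (hLc.image _ (hΦ.mono sL)) (fun h' => h (hinter ▸ h'.image _ hΨ.continuousOn))
  set X := Φ '' F ∪ Φ '' L with hX
  have hXc : IsCompact X := hF'.union hL'
  obtain ⟨ho1, ho2⟩ := isOpen_linked hXc
  obtain ⟨M, hM⟩ := hXc.isBounded.exists_norm_le
  -- the unlinked points, with a neighbourhood of `r` added, and the linked points
  set U1 : Set S2 := ({r}ᶜ ∩ Φ ⁻¹' {a | a ∉ X ∧ HasLog X (fun z => z - a)}) ∪
    (Ψ '' closedBall 0 M)ᶜ with hU1
  set U2 : Set S2 := {r}ᶜ ∩ Φ ⁻¹' {a | a ∉ X ∧ ¬ HasLog X (fun z => z - a)} with hU2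
  have o1 : IsOpen U1 := (hΦ.isOpen_inter_preimage isOpen_compl_singleton ho1).union
    (((isCompact_closedBall 0 M).image hΨ).isClosed.isOpen_compl)
  have o2 : IsOpen U2 := hΦ.isOpen_inter_preimage isOpen_compl_singleton ho2
  have hXmem : ∀ x, x ≠ r → Φ x ∈ X → x ∈ F ∪ L := by
    rintro x hxr (⟨y, hy, hxy⟩ | ⟨y, hy, hxy⟩)
    · left; rw [← hΨΦ x hxr, ← hxy, hΨΦ y (sF hy)]; exact hy
    · right; rw [← hΨΦ x hxr, ← hxy, hΨΦ y (sL hy)]; exact hy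
  have hrball : r ∈ (Ψ '' closedBall 0 M)ᶜ := by
    rintro ⟨z, -, hz⟩; exact hΨr z hz
  have key : U1 ∩ U2 = ∅ := by
    rw [eq_empty_iff_forall_notMem]
    rintro x ⟨h1 | h1, h2⟩
    · exact h2.2.2 h1.2.2
    · apply h2.2.2
      apply HasLog.of_large
      intro z hz
      have : Φ x ∉ closedBall 0 M := fun hb => h1 ⟨_, hb, hΨΦ x h2.1⟩
      rw [mem_closedBall_zero_iff, not_le] at this
      exact (hM z hz).trans_lt this
  intro hcon
  have hne := hcon U1 U2 o1 o2 (fun x hx => by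
    by_cases hxr : x = r
    · left; right; rw [hxr]; exact hrball
    · have hxX : Φ x ∉ X := fun h' => hx (hXmem x hxr h')
      by_cases hl : HasLog X (fun z => z - Φ x)
      · exact Or.inl (Or.inl ⟨hxr, hxX, hl⟩)
      · exact Or.inr ⟨hxr, hxX, hl⟩) ⟨r, hr, Or.inr hrball⟩
      ⟨Ψ a, ?_, hΨr a, ?_⟩
  · obtain ⟨x, -, hx⟩ := hne
    rw [key] at hx; exact hx
  · rintro (h' | h')
    · exact haX (Or.inl ⟨_, h', hΦΨ a⟩)
    · exact haX (Or.inr ⟨_, h', hΦΨ a⟩)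
  · change _ ∧ _
    rw [hΦΨ]; exact ⟨haX, ha⟩

/-! ### Indecomposable continua -/

/-- If `K` is a subcontinuum of the connected set `A` and `A \ K` splits into relatively open pieces
`U`, `V`, then `K` together with the piece outside `V` is connected. -/
lemma isPreconnected_union_part {α : Type*} [TopologicalSpace α] {A K U V : Set α}
    (hA : IsPreconnected A) (hAc : IsClosed A) (hK : IsConnected K) (hKc : IsClosed K)
    (hKA : K ⊆ A) (hU : IsOpen U) (hV : IsOpen V) (hUV : A \ K ⊆ U ∪ V)
    (hd : (A \ K) ∩ (U ∩ V) = ∅) : IsPreconnected (K ∪ (A \ V)) := by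
  have hM : IsClosed (K ∪ (A \ V)) := hKc.union (hAc.sdiff hV)
  have key : ∀ P Q : Set α, IsClosed P → IsClosed Q → K ∪ (A \ V) ⊆ P ∪ Q →
      (K ∪ (A \ V)) ∩ (P ∩ Q) = ∅ → K ⊆ P → K ∪ (A \ V) ⊆ P := by
    intro P Q hP hQ hPQ hdis hKP
    have := isPreconnected_closed_iff.1 hA (((K ∪ (A \ V)) ∩ P) ∪ (A \ U)) ((K ∪ (A \ V)) ∩ Q)
      ((hM.inter hP).union (hAc.sdiff hU)) (hM.inter hQ) ?_ ?_
    · intro x hx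
      by_contra hxP
      have hxQ := (hPQ hx).resolve_left hxP
      have hxA : x ∈ A := hx.elim (fun h => hKA h) fun h => h.1
      obtain ⟨y, hyA, hy1, hy2⟩ := this ⟨x, hxA, hx, hxQ⟩
      have hyP : y ∉ P := fun h => by
        have : y ∈ (K ∪ (A \ V)) ∩ (P ∩ Q) := ⟨hy2.1, h, hy2.2⟩
        rw [hdis] at this; exact this
      have hyK : y ∉ K := fun h => hyP (hKP h)
      have hyV : y ∉ V := fun h => by
        rcases hy2.1 with h' | h'
        · exact hyK h'
        · exact h'.2 h
      rcases hy1 with h | h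
      · exact hyP h.2
      · exact (hUV ⟨hyA, hyK⟩).elim h.2 hyV
    · intro x hx
      by_cases hxM : x ∈ K ∪ (A \ V)
      · rcases hPQ hxM with h | h
        · exact Or.inl (Or.inl ⟨hxM, h⟩)
        · exact Or.inr ⟨hxM, h⟩
      · have hxK : x ∉ K := fun h => hxM (Or.inl h)
        have hxV : x ∈ V := by
          by_contra h; exact hxM (Or.inr ⟨hx, h⟩)
        refine Or.inl (Or.inr ⟨hx, fun hxU => ?_⟩)
        have : x ∈ (A \ K) ∩ (U ∩ V) := ⟨⟨hx, hxK⟩, hxU, hxV⟩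
        rw [hd] at this; exact this
    · obtain ⟨k, hk⟩ := hK.nonempty
      exact ⟨k, hKA hk, Or.inl ⟨Or.inl hk, hKP hk⟩⟩
  rw [isPreconnected_iff_subset_of_disjoint_closed]
  intro P Q hP hQ hPQ hdis
  have hKd : K ∩ (P ∩ Q) = ∅ := by
    rw [← subset_empty_iff, ← hdis]; exact inter_subset_inter_left _ subset_union_left
  rcases isPreconnected_iff_subset_of_disjoint_closed.1 hK.isPreconnected P Q hP hQ
    (subset_union_left.trans hPQ) hKd with h | h
  · exact Or.inl (key P Q hP hQ hPQ hdis h)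
  · exact Or.inr (key Q P hQ hP (by rwa [union_comm Q P]) (by rwa [inter_comm Q P]) h)

/-- A proper subcontinuum of an indecomposable continuum has empty relative interior. -/
lemma IsIndecomposable.not_subset {A K O : Set S2} (hA : IsIndecomposable A) (hK : IsContinuum K)
    (hKA : K ⊆ A) (hne : K ≠ A) (hO : IsOpen O) (hOA : (O ∩ A).Nonempty) : ¬ O ∩ A ⊆ K := by
  intro hsub
  apply hA.2
  have hAcl : IsClosed A := hA.1.1.isClosed
  have hKcl : IsClosed K := hK.1.isClosed
  obtain ⟨x, hxA, hxK⟩ : ∃ x ∈ A, x ∉ K := by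
    by_contra! h; exact hne (hKA.antisymm h)
  by_cases hc : IsPreconnected (A \ K)
  · have hcA : closure (A \ K) ⊆ A := closure_minimal sdiff_subset hAcl
    refine ⟨K, closure (A \ K), hK, hKA, hne,
      ⟨hA.1.1.of_isClosed_subset isClosed_closure hcA,
        ⟨⟨x, subset_closure ⟨hxA, hxK⟩⟩, hc.closure⟩⟩, hcA, fun h => ?_, ?_⟩
    · obtain ⟨y, hyO, hyA⟩ := hOA
      rw [← h] at hyA
      obtain ⟨z, hzO, hz⟩ := mem_closure_iff.1 hyA O hO hyO
      exact hz.2 (hsub ⟨hzO, hz.1⟩)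
    · apply (union_subset hKA hcA).antisymm
      intro y hy
      by_cases h : y ∈ K
      · exact Or.inl h
      · exact Or.inr (subset_closure ⟨hy, h⟩)
  · rw [isPreconnected_iff_subset_of_disjoint] at hc
    push Not at hc
    obtain ⟨U, V, hU, hV, hUV, hd, h1, h2⟩ := hc
    obtain ⟨u, hu, hu'⟩ := Set.not_subset.1 h1
    obtain ⟨v, hv, hv'⟩ := Set.not_subset.1 h2
    have cont : ∀ U V, IsOpen U → IsOpen V → A \ K ⊆ U ∪ V → (A \ K) ∩ (U ∩ V) = ∅ →
        IsContinuum (K ∪ (A \ V)) := fun U V hU hV hUV hd =>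
      ⟨hK.1.union (hA.1.1.diff hV), ⟨hK.2.nonempty.mono subset_union_left,
        isPreconnected_union_part hA.1.2.isPreconnected hAcl hK.2 hKcl hKA hU hV hUV hd⟩⟩
    refine ⟨K ∪ (A \ V), K ∪ (A \ U), cont U V hU hV hUV hd, union_subset hKA sdiff_subset, ?_,
      cont V U hV hU (by rwa [union_comm]) (by rwa [inter_comm V U]),
      union_subset hKA sdiff_subset, ?_, ?_⟩
    · intro h
      have := hu.1
      rw [← h] at this
      rcases this with h' | h'
      · exact hu.2 h'
      · exact h'.2 ((hUV hu).resolve_left hu')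
    · intro h
      have := hv.1
      rw [← h] at this
      rcases this with h' | h'
      · exact hv.2 h'
      · exact h'.2 ((hUV hv).resolve_right hv')
    · apply (union_subset (union_subset hKA sdiff_subset) (union_subset hKA sdiff_subset)).antisymm
      intro y hy
      by_cases hyK : y ∈ K
      · exact Or.inl (Or.inl hyK)
      by_cases hyV : y ∈ V
      · refine Or.inr (Or.inr ⟨hy, fun hyU => ?_⟩)
        have : y ∈ (A \ K) ∩ (U ∩ V) := ⟨⟨hy, hyK⟩, hyU, hyV⟩
        rw [hd] at this; exact this
      · exact Or.inl (Or.inr ⟨hy, hyV⟩)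

lemma IsContinuum.union {K L : Set S2} (hK : IsContinuum K) (hL : IsContinuum L)
    (h : (K ∩ L).Nonempty) : IsContinuum (K ∪ L) :=
  ⟨hK.1.union hL.1, hK.2.union h hL.2⟩

/-- The union of two intersecting proper subcontinua of an indecomposable continuum is proper. -/
lemma IsIndecomposable.union_ne {A K L : Set S2} (hA : IsIndecomposable A) (hK : IsContinuum K)
    (hKA : K ⊆ A) (hKne : K ≠ A) (hL : IsContinuum L) (hLA : L ⊆ A) (hLne : L ≠ A) :
    K ∪ L ≠ A := fun h => hA.2 ⟨K, L, hK, hKA, hKne, hL, hLA, hLne, h⟩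

lemma isContinuum_component {Y : Set S2} (hY : IsCompact Y) {p : S2} (hp : p ∈ Y) :
    IsContinuum (connectedComponentIn Y p) :=
  ⟨hY.of_isClosed_subset (isClosed_of_closure_subset
      (isPreconnected_connectedComponentIn.closure.subset_connectedComponentIn
        (subset_closure (mem_connectedComponentIn hp))
        (closure_minimal (connectedComponentIn_subset Y p) hY.isClosed)))
    (connectedComponentIn_subset Y p),
    isConnected_connectedComponentIn_iff.2 hp⟩

/-- A proper closed subset of `A` misses a basic open set meeting `A`. -/
lemma exists_basis_disjoint {A K : Set S2} (hK : IsClosed K) (hKA : K ⊆ A) (hne : K ≠ A) :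
    ∃ B ∈ TopologicalSpace.countableBasis S2, (B ∩ A).Nonempty ∧ K ⊆ A \ B := by
  obtain ⟨x, hxA, hxK⟩ : ∃ x ∈ A, x ∉ K := by
    by_contra! h; exact hne (hKA.antisymm h)
  obtain ⟨B, hB, hxB, hBK⟩ := (TopologicalSpace.isBasis_countableBasis S2).exists_subset_of_mem_open
    (show x ∈ Kᶜ from hxK) hK.isOpen_compl
  exact ⟨B, hB, ⟨x, hxB, hxA⟩, fun y hy => ⟨hKA hy, fun hyB => hBK hyB hy⟩⟩

/-- A composant is covered by countably many proper subcontinua. -/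
lemma composant_countable {A : Set S2} (hA : IsContinuum A) {p : S2} (hp : p ∈ A) :
    ∃ 𝒬 : Set (Set S2), 𝒬.Countable ∧ (∀ K ∈ 𝒬, IsContinuum K ∧ K ⊆ A ∧ K ≠ A) ∧
      composant A p ⊆ ⋃₀ 𝒬 := by
  refine ⟨(fun B => connectedComponentIn (A \ B) p) ''
    {B ∈ TopologicalSpace.countableBasis S2 | (B ∩ A).Nonempty ∧ p ∉ B},
    ((TopologicalSpace.countable_countableBasis S2).mono fun B h => h.1).image _, ?_, ?_⟩
  · rintro _ ⟨B, ⟨hB, ⟨x, hxB, hxA⟩, hpB⟩, rfl⟩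
    refine ⟨isContinuum_component (hA.1.diff
      (TopologicalSpace.isOpen_of_mem_countableBasis hB)) ⟨hp, hpB⟩,
      (connectedComponentIn_subset _ _).trans sdiff_subset, fun h => ?_⟩
    rw [← h] at hxA
    exact (connectedComponentIn_subset _ _ hxA).2 hxB
  · rintro x ⟨K, ⟨hK, hKA, hKne, hpK⟩, hxK⟩
    obtain ⟨B, hB, hBA, hKB⟩ := exists_basis_disjoint hK.1.isClosed hKA hKne
    exact ⟨_, ⟨B, ⟨hB, hBA, (hKB hpK).2⟩, rfl⟩,
      hK.2.isPreconnected.subset_connectedComponentIn hpK hKB hxK⟩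

/-- In a compact set, a component can be separated from a disjoint closed set by a relatively
clopen set. -/
lemma clopen_sep {Y C : Set S2} (hY : IsCompact Y) {p : S2} (hp : p ∈ Y) (hC : IsClosed C)
    (hd : connectedComponentIn Y p ∩ C = ∅) :
    ∃ Z ⊆ Y, p ∈ Z ∧ IsClosed Z ∧ IsClosed (Y \ Z) ∧ Z ∩ C = ∅ := by
  have : CompactSpace Y := isCompact_iff_compactSpace.1 hY
  have h1 := connectedComponent_eq_iInter_isClopen (⟨p, hp⟩ : Y)
  rw [connectedComponentIn_eq_image hp, h1] at hd
  set I := { s : Set Y // IsClopen s ∧ (⟨p, hp⟩ : Y) ∈ s }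
  have hcl : IsClosed ((↑) ⁻¹' C : Set Y) := hC.preimage continuous_subtype_val
  obtain ⟨⟨s, hs, hps⟩, hsC⟩ : ∃ s : I, (s : Set Y) ∩ (↑) ⁻¹' C = ∅ := by
    have : Nonempty I := ⟨⟨univ, isClopen_univ, trivial⟩⟩
    have := exists_subset_nhds_of_isCompact' (V := fun s : I => (s : Set Y)) (U := ((↑) ⁻¹' C)ᶜ)
      (by
        rintro ⟨s, hs, hps⟩ ⟨t, ht, hpt⟩
        exact ⟨⟨s ∩ t, hs.inter ht, hps, hpt⟩, inter_subset_left, inter_subset_right⟩)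
      (fun s => s.2.1.isClosed.isCompact) (fun s => s.2.1.isClosed)
      (fun x hx => hcl.isOpen_compl.mem_nhds fun hxC => by
        have : (x : S2) ∈ (∅ : Set S2) := hd ▸ ⟨⟨x, hx, rfl⟩, hxC⟩
        exact this)
    obtain ⟨s, hs⟩ := this
    exact ⟨s, by
      rw [eq_empty_iff_forall_notMem]; rintro x ⟨h, h'⟩; exact hs h h'⟩
  refine ⟨(↑) '' s, by rintro _ ⟨x, -, rfl⟩; exact x.2, ⟨_, hps, rfl⟩,
    (hs.isClosed.isCompact.image continuous_subtype_val).isClosed, ?_, ?_⟩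
  · have : Y \ (Subtype.val '' s) = Subtype.val '' sᶜ := by
      ext x; constructor
      · rintro ⟨hx, hx'⟩
        exact ⟨⟨x, hx⟩, fun h => hx' ⟨_, h, rfl⟩, rfl⟩
      · rintro ⟨y, hy, rfl⟩
        exact ⟨y.2, by rintro ⟨z, hz, hzy⟩; exact hy (Subtype.ext hzy ▸ hz)⟩
    rw [this]
    exact (hs.compl.isClosed.isCompact.image continuous_subtype_val).isClosed
  · rw [eq_empty_iff_forall_notMem]
    rintro _ ⟨⟨x, hx, rfl⟩, hxC⟩
    have : x ∈ s ∩ (↑) ⁻¹' C := ⟨hx, hxC⟩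
    rw [hsC] at this; exact this

lemma mem_composant_self {A : Set S2} {p : S2} (hp : p ∈ A) (hnt : ¬ A.Subsingleton) :
    p ∈ composant A p :=
  ⟨{p}, ⟨⟨isCompact_singleton, isConnected_singleton⟩, singleton_subset_iff.2 hp,
    fun h => hnt (h ▸ subsingleton_singleton), rfl⟩, rfl⟩

/-- Composants are dense (boundary bumping). -/
lemma composant_dense {A : Set S2} (hA : IsContinuum A) (hnt : ¬ A.Subsingleton) {p : S2}
    (hp : p ∈ A) : A ⊆ closure (composant A p) := by
  intro q hq
  rw [mem_closure_iff_nhds]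
  intro O hO
  obtain ⟨O', ⟨hqO', hO'⟩, hsub⟩ : ∃ O', (q ∈ O' ∧ IsOpen O') ∧ closure O' ⊆ O := by
    obtain ⟨C, hC, hCcl, hCO⟩ := exists_mem_nhds_isClosed_subset hO
    exact ⟨interior C, ⟨mem_interior_iff_mem_nhds.2 hC, isOpen_interior⟩,
      (closure_minimal interior_subset hCcl).trans hCO⟩
  by_cases hpO : p ∈ O'
  · exact ⟨p, hsub (subset_closure hpO), mem_composant_self hp hnt⟩
  have hY : IsCompact (A \ O') := hA.1.diff hO'
  have hpY : p ∈ A \ O' := ⟨hp, hpO⟩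
  have hK := isContinuum_component hY hpY
  have hKsub := connectedComponentIn_subset (A \ O') p
  have hne : (connectedComponentIn (A \ O') p ∩ closure O').Nonempty := by
    by_contra hcon
    obtain ⟨Z, hZY, hpZ, hZ, hZ', hZO⟩ := clopen_sep hY hpY isClosed_closure
      (not_nonempty_iff_eq_empty.1 hcon)
    obtain ⟨x, hxA, hx1, hx2⟩ := isPreconnected_closed_iff.1 hA.2.isPreconnected Z
      ((A \ O') \ Z ∪ (A ∩ closure O')) hZ (hZ'.union (hA.1.isClosed.inter isClosed_closure))
      (fun x hx => by
        by_cases h1 : x ∈ Z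
        · exact Or.inl h1
        by_cases h2 : x ∈ O'
        · exact Or.inr (Or.inr ⟨hx, subset_closure h2⟩)
        · exact Or.inr (Or.inl ⟨⟨hx, h2⟩, h1⟩)) ⟨p, hp, hpZ⟩
      ⟨q, hq, Or.inr ⟨hq, subset_closure hqO'⟩⟩
    rcases hx2 with h | h
    · exact h.2 hx1
    · have : x ∈ Z ∩ closure O' := ⟨hx1, h.2⟩
      rw [hZO] at this; exact this
  obtain ⟨x, hxK, hxO⟩ := hne
  refine ⟨x, hsub hxO, _, ⟨hK, hKsub.trans sdiff_subset, fun h => ?_, mem_connectedComponentIn hpY⟩,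
    hxK⟩
  rw [← h] at hq
  exact (hKsub hq).2 hqO'

lemma isPreconnected_composant (A : Set S2) (p : S2) : IsPreconnected (composant A p) :=
  isPreconnected_sUnion p _ (fun _ h => h.2.2.2) fun _ h => h.1.2.isPreconnected

lemma composant_subset (A : Set S2) (p : S2) : composant A p ⊆ A :=
  sUnion_subset fun _ h => h.2.1

/-- The Baire category theorem for compact sets. -/
lemma baire_compact {A : Set S2} (hA : IsCompact A) (hne : A.Nonempty) {𝒞 : Set (Set S2)}
    (hc : 𝒞.Countable) (hcl : ∀ C ∈ 𝒞, IsClosed C) (hcov : A ⊆ ⋃₀ 𝒞) :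
    ∃ C ∈ 𝒞, ∃ O, IsOpen O ∧ (O ∩ A).Nonempty ∧ O ∩ A ⊆ C := by
  have : CompactSpace A := isCompact_iff_compactSpace.1 hA
  have : Nonempty A := hne.to_subtype
  have : Countable 𝒞 := hc.to_subtype
  obtain ⟨⟨C, hC⟩, hint⟩ := nonempty_interior_of_iUnion_of_closed
    (f := fun C : 𝒞 => ((↑) ⁻¹' (C : Set S2) : Set A))
    (fun C => (hcl C C.2).preimage continuous_subtype_val)
    (by
      rw [eq_univ_iff_forall]; intro x
      obtain ⟨C, hC, hx⟩ := hcov x.2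
      exact mem_iUnion.2 ⟨⟨C, hC⟩, hx⟩)
  obtain ⟨x, hx⟩ := hint
  obtain ⟨O, hO, hO'⟩ := isOpen_induced_iff.1 (isOpen_interior (s := ((↑) ⁻¹' C : Set A)))
  refine ⟨C, hC, O, hO, ⟨x, ?_, x.2⟩, ?_⟩
  · rw [← hO'] at hx; exact hx
  · rintro y ⟨hyO, hyA⟩
    have : (⟨y, hyA⟩ : A) ∈ interior ((↑) ⁻¹' C : Set A) := by rw [← hO']; exact hyO
    exact (interior_subset this : (⟨y, hyA⟩ : A) ∈ ((↑) ⁻¹' C : Set A))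

/-! ### Nowhere density of continua in the boundary of a region -/

lemma preconnectedSpace_S2 : PreconnectedSpace S2 := by
  have h : 1 < Module.rank ℝ (EuclideanSpace ℝ (Fin 3)) := by
    rw [rank_eq_card_basis (EuclideanSpace.basisFun (Fin 3) ℝ).toBasis]; simp
  exact isPreconnected_iff_preconnectedSpace.1
    (isConnected_sphere h (0 : EuclideanSpace ℝ (Fin 3)) zero_le_one).isPreconnected

lemma locallyConnectedSpace_S2 : LocallyConnectedSpace S2 := by
  have : Fact (Module.finrank ℝ (EuclideanSpace ℝ (Fin 3)) = 2 + 1) := ⟨by simp⟩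
  exact ChartedSpace.locallyConnectedSpace (EuclideanSpace ℝ (Fin 2)) S2

/-- The complement of a complementary component of a continuum is connected. -/
lemma isPreconnected_compl_component {F : Set S2} (hF : IsContinuum F) (r : S2) :
    IsPreconnected (connectedComponentIn Fᶜ r)ᶜ := by
  have := preconnectedSpace_S2
  have := locallyConnectedSpace_S2
  set W := connectedComponentIn Fᶜ r
  have hWo : IsOpen W := hF.1.isClosed.isOpen_compl.connectedComponentIn
  have hU : IsOpen (Fᶜ \ W) := by
    rw [isOpen_iff_forall_mem_open]
    rintro x ⟨hx, hxW⟩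
    refine ⟨connectedComponentIn Fᶜ x, fun y hy => ⟨connectedComponentIn_subset _ _ hy, fun hyW =>
      hxW ?_⟩, hF.1.isClosed.isOpen_compl.connectedComponentIn, mem_connectedComponentIn hx⟩
    have h1 := connectedComponentIn_eq hy
    have h2 := connectedComponentIn_eq hyW
    change x ∈ connectedComponentIn Fᶜ r
    rw [h2, ← h1]; exact mem_connectedComponentIn hx
  have := isPreconnected_union_part (A := univ) (K := F) (U := Fᶜ \ W) (V := W) isPreconnected_univ
    isClosed_univ hF.2 hF.1.isClosed (subset_univ _) hU hWo
    (fun x hx => by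
      by_cases h : x ∈ W
      · exact Or.inr h
      · exact Or.inl ⟨hx.2, h⟩)
    (by
      rw [eq_empty_iff_forall_notMem]
      rintro x ⟨-, h1, h2⟩; exact h1.2 h2)
  convert this using 1
  ext x
  constructor
  · intro h; exact Or.inr ⟨trivial, h⟩
  · rintro (h | h)
    · intro hW; exact connectedComponentIn_subset _ _ hW h
    · exact h.2

/-- If the complement of the closed set `E` is disconnected, it contains a nonempty open set that
misses the connected set `R` and has its boundary in `E`. -/
lemma exists_piece {E R : Set S2} (hE : IsClosed E) (hR : IsPreconnected R) (hRE : R ∩ E = ∅)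
    (h : ¬ IsPreconnected Eᶜ) :
    ∃ N, IsOpen N ∧ N.Nonempty ∧ N ∩ R = ∅ ∧ N ∩ E = ∅ ∧ closure N ⊆ N ∪ E := by
  have main : ∀ U V, IsOpen U → IsOpen V → Eᶜ ⊆ U ∪ V → Eᶜ ∩ (U ∩ V) = ∅ → ¬ Eᶜ ⊆ U → R ⊆ U →
      ∃ N, IsOpen N ∧ N.Nonempty ∧ N ∩ R = ∅ ∧ N ∩ E = ∅ ∧ closure N ⊆ N ∪ E := by
    intro U V hU hV hUV hd hne hRU
    obtain ⟨x, hxE, hxU⟩ := Set.not_subset.1 hne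
    refine ⟨V ∩ Eᶜ, hV.inter hE.isOpen_compl, ⟨x, (hUV hxE).resolve_left hxU, hxE⟩, ?_, ?_, ?_⟩
    · rw [eq_empty_iff_forall_notMem]
      rintro y ⟨⟨h1, h2⟩, h3⟩
      have : y ∈ Eᶜ ∩ (U ∩ V) := ⟨h2, hRU h3, h1⟩
      rw [hd] at this; exact this
    · rw [eq_empty_iff_forall_notMem]
      rintro y ⟨⟨h1, h2⟩, h3⟩; exact h2 h3
    · intro y hy
      by_cases hyE : y ∈ E
      · exact Or.inr hyE
      rcases hUV hyE with h' | h'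
      · obtain ⟨z, hz, hz1, hz2⟩ := _root_.mem_closure_iff.1 hy U hU h'
        have : z ∈ Eᶜ ∩ (U ∩ V) := ⟨hz2, hz, hz1⟩
        rw [hd] at this; exact this.elim
      · exact Or.inl ⟨h', hyE⟩
  rw [isPreconnected_iff_subset_of_disjoint] at h
  push Not at h
  obtain ⟨U, V, hU, hV, hUV, hd, h1, h2⟩ := h
  have hRE' : R ⊆ Eᶜ := fun x hx hxE => by
    have : x ∈ R ∩ E := ⟨hx, hxE⟩
    rw [hRE] at this; exact this
  rcases isPreconnected_iff_subset_of_disjoint.1 hR U V hU hV (hRE'.trans hUV)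
    (by rw [← subset_empty_iff, ← hd]; exact inter_subset_inter_left _ hRE') with h' | h'
  · exact main U V hU hV hUV hd h1 h'
  · exact main V U hV hU (by rwa [union_comm]) (by rwa [inter_comm V U]) h2 h'

/-- The crux. Let the indecomposable continuum `A` lie in the boundary of the region `R`. A
continuum `F` off `R` that does not contain `A` is nowhere dense in `A`.

Fill `F` to a continuum `F'` with connected complement. If `F` had interior in `A`, every point of
`A` would lie in a proper subcontinuum `L` with `L ∩ F'` disconnected, and by Janiszewski's theorem
`F' ∪ L` would cut off an open set `N` missing `R`. If two such sets `N` meet then so do the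
corresponding `L`, so separability of the sphere leaves only countably many composants of `A`,
against the Baire category theorem. -/
lemma nowhere_dense {R A F : Set S2} (hRc : IsConnected R)
    (hA : IsIndecomposable A) (hAR : A ⊆ closure R) (hAR' : A ∩ R = ∅)
    (hF : IsContinuum F) (hFR : F ∩ R = ∅) (hAF : ¬ A ⊆ F) {O : Set S2} (hO : IsOpen O)
    (hOA : (O ∩ A).Nonempty) : ¬ O ∩ A ⊆ F := by
  intro hsub
  have := locallyConnectedSpace_S2
  obtain ⟨r, hr⟩ := hRc.nonempty
  have notR : ∀ {S : Set S2}, S ∩ R = ∅ → ∀ x ∈ S, x ∉ R := fun h x hx hxR => by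
    have : x ∈ (∅ : Set S2) := h ▸ ⟨hx, hxR⟩
    exact this
  have hRF : R ⊆ Fᶜ := fun x hx hxF => notR hFR x hxF hx
  set W := connectedComponentIn Fᶜ r with hW
  have hWo : IsOpen W := hF.1.isClosed.isOpen_compl.connectedComponentIn
  have hRW : R ⊆ W := hRc.isPreconnected.subset_connectedComponentIn hr hRF
  have hWF : W ⊆ Fᶜ := connectedComponentIn_subset _ _
  have hF'c : IsCompact Wᶜ := hWo.isClosed_compl.isCompact
  have hF'p : IsPreconnected Wᶜ := isPreconnected_compl_component hF r
  have hAW : ∀ x ∈ A, x ∉ F → x ∈ W := by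
    intro x hx hxF
    have h1 : IsPreconnected (insert x R) :=
      hRc.isPreconnected.subset_closure (subset_insert _ _)
        (insert_subset (hAR hx) subset_closure)
    exact h1.subset_connectedComponentIn (mem_insert_of_mem _ hr)
      (insert_subset hxF hRF) (mem_insert _ _)
  have hAW' : ¬ A ⊆ Wᶜ := fun h => hAF fun x hx => by
    by_contra hxF; exact h hx (hAW x hx hxF)
  have hAcl : IsClosed A := hA.1.1.isClosed
  have hnt : ¬ A.Subsingleton := fun hs => hAF fun x hx => by
    obtain ⟨y, hy⟩ := hOA
    rw [hs hx hy.2]; exact hsub hy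
  have step1 : ∀ p ∈ A, ∃ L, IsContinuum L ∧ L ⊆ A ∧ L ≠ A ∧ p ∈ L ∧ ¬ IsPreconnected (Wᶜ ∩ L) := by
    intro p hp
    by_contra! hcon
    have hT : IsPreconnected (Wᶜ ∩ composant A p) := by
      refine isPreconnected_of_forall_pair ?_
      rintro x ⟨hxW, L, ⟨hL, hLA, hLne, hpL⟩, hxL⟩ y ⟨hyW, L', ⟨hL', hLA', hLne', hpL'⟩, hyL'⟩
      have hu := hL.union hL' ⟨p, hpL, hpL'⟩
      have hsu := union_subset hLA hLA'
      have hne := hA.union_ne hL hLA hLne hL' hLA' hLne'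
      exact ⟨Wᶜ ∩ (L ∪ L'), fun z hz => ⟨hz.1, _, ⟨hu, hsu, hne, Or.inl hpL⟩, hz.2⟩,
        ⟨hxW, Or.inl hxL⟩, ⟨hyW, Or.inr hyL'⟩, hcon _ hu hsu hne (Or.inl hpL)⟩
    have hOT : O ∩ A ⊆ closure (Wᶜ ∩ composant A p) := by
      rintro x ⟨hxO, hxA⟩
      rw [_root_.mem_closure_iff]
      intro G hG hxG
      obtain ⟨z, hz, hzc⟩ := _root_.mem_closure_iff.1 (composant_dense hA.1 hnt hp hxA) (G ∩ O)
        (hG.inter hO) ⟨hxG, hxO⟩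
      have hzF : z ∈ F := hsub ⟨hz.2, composant_subset _ _ hzc⟩
      exact ⟨z, hz.1, fun hzW => hWF hzW hzF, hzc⟩
    have hTA : closure (Wᶜ ∩ composant A p) ⊆ A :=
      closure_minimal (inter_subset_right.trans (composant_subset _ _)) hAcl
    have hTW : closure (Wᶜ ∩ composant A p) ⊆ Wᶜ := closure_minimal inter_subset_left
      hWo.isClosed_compl
    exact hA.not_subset ⟨hA.1.1.of_isClosed_subset isClosed_closure hTA,
      hOA.mono hOT, hT.closure⟩ hTA (fun h => hAW' (h ▸ hTW)) hO hOA hOT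
  have step2 : ∀ p : A, ∃ L N, (IsContinuum L ∧ L ⊆ A ∧ L ≠ A ∧ (p : S2) ∈ L) ∧ IsOpen N ∧
      N.Nonempty ∧ N ∩ R = ∅ ∧ N ⊆ W ∧ closure N ⊆ N ∪ (Wᶜ ∪ L) := by
    rintro ⟨p, hp⟩
    obtain ⟨L, hL, hLA, hLne, hpL, hnp⟩ := step1 p hp
    have hrn : r ∉ Wᶜ ∪ L := by
      rintro (h | h)
      · exact h (hRW hr)
      · exact notR hAR' r (hLA h) hr
    have hsep := janiszewski hF'c hL.1 hF'p hL.2.isPreconnected hrn hnp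
    obtain ⟨N, h1, h2, h3, h4, h5⟩ := exists_piece (hF'c.isClosed.union hL.1.isClosed)
      hRc.isPreconnected (by
        rw [eq_empty_iff_forall_notMem]
        rintro x ⟨hxR, h | h⟩
        · exact h (hRW hxR)
        · exact notR hAR' x (hLA h) hxR) hsep
    refine ⟨L, N, ⟨hL, hLA, hLne, hpL⟩, h1, h2, h3, fun x hx => ?_, h5⟩
    by_contra hxW
    have : x ∈ N ∩ (Wᶜ ∪ L) := ⟨hx, Or.inl hxW⟩
    rw [h4] at this; exact this
  choose L N hL hNo hNne hNR hNW hNcl using step2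
  have : Nonempty S2 := ⟨r⟩
  have hnum : ∀ p : A, ∃ k, TopologicalSpace.denseSeq S2 k ∈ N p := fun p => by
    obtain ⟨x, hx, k, rfl⟩ := (TopologicalSpace.denseRange_denseSeq S2).inter_open_nonempty _
      (hNo p) (hNne p)
    exact ⟨k, hx⟩
  choose k hk using hnum
  have step3 : ∀ p q : A, k p = k q → (L p ∩ L q).Nonempty := by
    intro p q hpq
    by_contra hdis
    rw [not_nonempty_iff_eq_empty] at hdis
    have offA : ∀ s : A, ∀ x ∈ A, x ∉ N s := fun s x hx hxN => by
      obtain ⟨y, hy, hyR⟩ := _root_.mem_closure_iff.1 (hAR hx) _ (hNo s) hxN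
      exact notR (hNR s) y hy hyR
    have hsubW : W ⊆ N p ∩ N q := by
      refine isPreconnected_connectedComponentIn.subset_of_closure_inter_subset
        ((hNo p).inter (hNo q)) ?_ ?_
      · exact ⟨_, hNW p (hk p), hk p, hpq ▸ hk q⟩
      · rintro x ⟨hx, hxW⟩
        have h1 := hNcl p (closure_mono inter_subset_left hx)
        have h2 := hNcl q (closure_mono inter_subset_right hx)
        rcases h1 with h1 | h1 | h1
        · rcases h2 with h2 | h2 | h2
          · exact ⟨h1, h2⟩
          · exact (h2 hxW).elim
          · exact (offA p x ((hL q).2.1 h2) h1).elim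
        · exact (h1 hxW).elim
        · rcases h2 with h2 | h2 | h2
          · exact (offA q x ((hL p).2.1 h1) h2).elim
          · exact (h2 hxW).elim
          · have : x ∈ L p ∩ L q := ⟨h1, h2⟩
            rw [hdis] at this; exact this.elim
    exact notR (hNR p) r (hsubW (hRW hr)).1 hr
  -- countably many composants cover `A`
  have hQ : ∀ p : A, _ := fun p => composant_countable hA.1 p.2
  choose 𝒬 hQc hQp hQcov using hQ
  have hrep : ∀ m : ℕ, ∃ p : A, ∀ q : A, k q = m → k p = m := fun m => by
    by_cases h : ∃ q : A, k q = m
    · obtain ⟨q, hq⟩ := h; exact ⟨q, fun _ _ => hq⟩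
    · obtain ⟨y, hy⟩ := hOA
      exact ⟨⟨y, hy.2⟩, fun q hq => (h ⟨q, hq⟩).elim⟩
  choose rep hrep using hrep
  obtain ⟨C, hC, G, hG, hGA, hGC⟩ := baire_compact (𝒞 := ⋃ m : ℕ, 𝒬 (rep m)) hA.1.1
    hA.1.2.nonempty (countable_iUnion fun m => hQc _)
    (fun C hC => by
      obtain ⟨m, hm⟩ := mem_iUnion.1 hC
      exact (hQp _ C hm).1.1.isClosed)
    (fun x hx => by
      have h1 := hrep (k ⟨x, hx⟩) ⟨x, hx⟩ rfl
      have h2 := step3 _ _ h1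
      set p := rep (k ⟨x, hx⟩)
      have hx' : x ∈ composant A p :=
        ⟨L p ∪ L ⟨x, hx⟩, ⟨(hL _).1.union (hL _).1 h2, union_subset (hL _).2.1 (hL _).2.1,
          hA.union_ne (hL _).1 (hL _).2.1 (hL _).2.2.1 (hL _).1 (hL _).2.1 (hL _).2.2.1,
          Or.inl (hL p).2.2.2⟩, Or.inr (hL ⟨x, hx⟩).2.2.2⟩
      obtain ⟨Q, hQ, hxQ⟩ := hQcov p hx'
      exact ⟨Q, mem_iUnion.2 ⟨_, hQ⟩, hxQ⟩)
  obtain ⟨m, hm⟩ := mem_iUnion.1 hC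
  obtain ⟨hCc, hCA, hCne⟩ := hQp _ C hm
  exact hA.not_subset hCc hCA hCne hG hGA hGC

/-- Removing countably many continua off `R` from an indecomposable continuum in the boundary of
`R` leaves nothing or a dense connected set: some composant survives. -/
lemma diff_sUnion {R A : Set S2} (hRc : IsConnected R)
    (hA : IsIndecomposable A) (hAR : A ⊆ closure R) (hAR' : A ∩ R = ∅)
    {𝓕 : Set (Set S2)} (h𝓕 : 𝓕.Countable) (hF : ∀ F ∈ 𝓕, IsContinuum F ∧ F ∩ R = ∅) :
    A \ ⋃₀ 𝓕 = ∅ ∨ (IsPreconnected (A \ ⋃₀ 𝓕) ∧ A ⊆ closure (A \ ⋃₀ 𝓕)) := by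
  by_cases hex : ∃ F ∈ 𝓕, A ⊆ F
  · obtain ⟨F, hF', hAF⟩ := hex
    exact Or.inl (sdiff_eq_empty.2 (hAF.trans (subset_sUnion_of_mem hF')))
  push Not at hex
  by_cases hnt : A.Subsingleton
  · rcases (A \ ⋃₀ 𝓕).eq_empty_or_nonempty with h | ⟨x, hx⟩
    · exact Or.inl h
    · refine Or.inr ⟨(hnt.anti sdiff_subset).isPreconnected, fun y hy => subset_closure ?_⟩
      rw [hnt hy hx.1]; exact hx
  right
  obtain ⟨p, hp, hpF⟩ : ∃ p ∈ A, ∀ F ∈ 𝓕, composant A p ∩ F = ∅ := by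
    by_contra! hcon
    -- each point of `A` is joined to some `F` by a proper subcontinuum `K` of `A`, and `K` misses a
    -- basic open set `B`; so countably many components of the sets `F ∪ (A \ B)` cover `A`
    have hne : ∀ F : 𝓕, ∃ x, x ∈ (F : Set S2) := fun F => (hF F F.2).1.2.nonempty
    choose pt hpt using hne
    have hcF : Countable 𝓕 := h𝓕.to_subtype
    have hX : ∀ (F : 𝓕) (B : Set S2), IsOpen B → IsCompact ((F : Set S2) ∪ (A \ B)) :=
      fun F B hB => (hF F F.2).1.1.union (hA.1.1.diff hB)
    obtain ⟨C, hC, G, hG, hGA, hGC⟩ := baire_compact (𝒞 := ⋃ F : 𝓕,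
      (fun B => connectedComponentIn ((F : Set S2) ∪ (A \ B)) (pt F)) ''
        {B ∈ TopologicalSpace.countableBasis S2 | (B ∩ A).Nonempty}) hA.1.1 hA.1.2.nonempty
      (countable_iUnion fun F =>
        ((TopologicalSpace.countable_countableBasis S2).mono fun B h => h.1).image _)
      (by
        intro C hC
        obtain ⟨F, B, ⟨hB, -⟩, rfl⟩ := mem_iUnion.1 hC
        exact (isContinuum_component (hX F B (TopologicalSpace.isOpen_of_mem_countableBasis hB))
          (Or.inl (hpt F))).1.isClosed)
      (by
        intro x hx
        obtain ⟨F, hF1, y, ⟨K, ⟨hK, hKA, hKne, hxK⟩, hyK⟩, hyF⟩ := hcon x hx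
        obtain ⟨B, hB, hBA, hKB⟩ := exists_basis_disjoint hK.1.isClosed hKA hKne
        refine ⟨_, mem_iUnion.2 ⟨⟨F, hF1⟩, B, ⟨hB, hBA⟩, rfl⟩, ?_⟩
        exact ((hF F hF1).1.union hK ⟨y, hyF, hyK⟩).2.isPreconnected.subset_connectedComponentIn
          (Or.inl (hpt ⟨F, hF1⟩)) (union_subset_union_right _ hKB) (Or.inr hxK))
    obtain ⟨F, B, ⟨hB, hBA⟩, rfl⟩ := mem_iUnion.1 hC
    have hBo := TopologicalSpace.isOpen_of_mem_countableBasis hB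
    have hXs := connectedComponentIn_subset ((F : Set S2) ∪ (A \ B)) (pt F)
    refine nowhere_dense hRc hA hAR hAR' (isContinuum_component (hX F B hBo) (Or.inl (hpt F)))
      ?_ ?_ hG hGA hGC
    · rw [eq_empty_iff_forall_notMem]
      rintro x ⟨hx, hxR⟩
      rcases hXs hx with h | h
      · have : x ∈ (F : Set S2) ∩ R := ⟨h, hxR⟩
        rw [(hF F F.2).2] at this; exact this
      · have : x ∈ A ∩ R := ⟨h.1, hxR⟩
        rw [hAR'] at this; exact this
    · intro hsub
      refine nowhere_dense hRc hA hAR hAR' (hF F F.2).1 (hF F F.2).2 (hex F F.2) hBo hBA ?_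
      rintro x ⟨hxB, hxA⟩
      exact (hXs (hsub hxA)).resolve_right fun h => h.2 hxB
  have hsub : composant A p ⊆ A \ ⋃₀ 𝓕 := fun x hx => ⟨composant_subset _ _ hx, by
    rintro ⟨F, hF', hxF⟩
    have : x ∈ composant A p ∩ F := ⟨hx, hxF⟩
    rw [hpF F hF'] at this; exact this⟩
  have hd := composant_dense hA.1 hnt hp
  exact ⟨(isPreconnected_composant A p).subset_closure hsub (sdiff_subset.trans hd),
    hd.trans (closure_mono hsub)⟩

/-! ### Lifting along branched coverings -/

/-- The punctured disc is the image of a half-plane under the exponential. -/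
lemma isPreconnected_punctured_ball (a : ℂ) {ε : ℝ} (hε : 0 < ε) :
    IsPreconnected (ball a ε \ {a}) := by
  have himg : (fun z : ℂ => a + Complex.exp z) '' {z : ℂ | z.re < Real.log ε} = ball a ε \ {a} := by
    ext w
    constructor
    · rintro ⟨z, hz, rfl⟩
      refine ⟨?_, ?_⟩
      · rw [mem_ball, dist_eq_norm, add_sub_cancel_left, Complex.norm_exp]
        exact (Real.lt_log_iff_exp_lt hε).1 hz
      · simp [Complex.exp_ne_zero]
    · rintro ⟨hw, hwa⟩
      have hne : w - a ≠ 0 := sub_ne_zero.2 hwa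
      refine ⟨Complex.log (w - a), ?_, by simp [Complex.exp_log hne]⟩
      rw [mem_ofPred_eq, Complex.log_re]
      exact Real.log_lt_log (norm_pos_iff.2 hne) (by simpa [dist_eq_norm] using hw)
  rw [← himg]
  refine ((convex_halfSpace_re_lt _).isPreconnected).image _ ?_
  fun_prop

/-- Every point of the sphere has small connected open neighbourhoods which remain connected when
the point is removed. -/
lemma exists_punctured_nhd {v : S2} {O : Set S2} (hO : IsOpen O) (hv : v ∈ O) :
    ∃ N, IsOpen N ∧ v ∈ N ∧ N ⊆ O ∧ IsPreconnected N ∧ IsPreconnected (N \ {v}) := by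
  obtain ⟨Φ, Ψ, hΦ, hΨ, hΨr, hΦΨ, hΨΦ⟩ := exists_stereographic (-v)
  have hvr : v ≠ -v := by
    intro h
    exact ne_neg_of_mem_unit_sphere ℝ v h
  obtain ⟨ε, hε, hball⟩ := Metric.isOpen_iff.1 (hO.preimage hΨ) (Φ v)
    (by rw [mem_preimage, hΨΦ v hvr]; exact hv)
  have hinj : Function.Injective Ψ := fun x y h => by rw [← hΦΨ x, h, hΦΨ]
  refine ⟨Ψ '' ball (Φ v) ε, ?_, ⟨Φ v, mem_ball_self hε, hΨΦ v hvr⟩, image_subset_iff.2 hball,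
    isPreconnected_ball.image _ hΨ.continuousOn, ?_⟩
  · have : Ψ '' ball (Φ v) ε = {-v}ᶜ ∩ Φ ⁻¹' ball (Φ v) ε := by
      ext x
      constructor
      · rintro ⟨z, hz, rfl⟩
        exact ⟨hΨr z, by rw [mem_preimage, hΦΨ]; exact hz⟩
      · rintro ⟨hx, hx'⟩
        exact ⟨Φ x, hx', hΨΦ x hx⟩
    rw [this]
    exact hΦ.isOpen_inter_preimage isOpen_compl_singleton isOpen_ball
  · have : Ψ '' ball (Φ v) ε \ {v} = Ψ '' (ball (Φ v) ε \ {Φ v}) := by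
      rw [image_sdiff hinj, image_singleton, hΨΦ v hvr]
    rw [this]
    exact (isPreconnected_punctured_ball _ hε).image _ hΨ.continuousOn

/-- The topological properties of a branched covering of degree `d ≥ 2` used below: off the finite
set `V` of critical values, the fibres have `d` points and `f` maps neighbourhoods of points of the
fibre onto neighbourhoods. No assumption is made about `f` near critical points. -/
structure FinBranched (f : S2 → S2) (V : Set S2) (d : ℕ) : Prop where
  cont : Continuous f
  fin : V.Finite
  nhds : ∀ x, f x ∉ V → map f (𝓝 x) = 𝓝 (f x)
  card : ∀ y ∉ V, (f ⁻¹' {y}).ncard = d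
  two_le : 2 ≤ d

lemma nontrivial_S2 : Nontrivial S2 := by
  obtain ⟨x, hx⟩ := (NormedSpace.sphere_nonempty (E := EuclideanSpace ℝ (Fin 3)) (x := 0)
    (r := 1)).2 zero_le_one
  refine ⟨⟨x, hx⟩, -⟨x, hx⟩, fun h => ?_⟩
  exact ne_neg_of_mem_unit_sphere ℝ (⟨x, hx⟩ : S2) h

lemma neBot_S2 (x : S2) : (𝓝[≠] x).NeBot := by
  have := nontrivial_S2
  have := preconnectedSpace_S2
  have : ConnectedSpace S2 := { toNonempty := ⟨x⟩ }
  infer_instance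

lemma dense_compl_finite {V : Set S2} (hV : V.Finite) : Dense Vᶜ := by
  have := neBot_S2
  have := dense_univ.sdiff_finite hV
  rwa [← compl_eq_univ_sdiff] at this

/-- If the boundary of `U` has no image in the region `N`, then `f '' U` is closed in `N`; if it is
also open in `N` and nonempty there, it contains `N`. -/
lemma subset_image_of_open {f : S2 → S2} (hf : Continuous f) {U N : Set S2}
    (hN : IsOpen N) (hNc : IsPreconnected N)
    (hfr : f ⁻¹' N ∩ frontier U = ∅) (hne : (U ∩ f ⁻¹' N).Nonempty)
    (hop : ∀ y ∈ f '' U ∩ N, f '' U ∈ 𝓝 y) : N ⊆ f '' U := by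
  obtain ⟨x, hxU, hxN⟩ := hne
  have h := hNc.subset_of_closure_inter_subset (u := f '' U ∩ N) ?_ ?_ ?_
  · exact h.trans inter_subset_left
  · rw [isOpen_iff_mem_nhds]
    exact fun y hy => inter_mem (hop y hy) (hN.mem_nhds hy.2)
  · exact ⟨f x, hxN, ⟨x, hxU, rfl⟩, hxN⟩
  · rintro y ⟨hy, hyN⟩
    refine ⟨?_, hyN⟩
    have hcl : IsClosed (f '' closure U) := (isClosed_closure.isCompact.image hf).isClosed
    have : y ∈ f '' closure U := closure_minimal
      (inter_subset_left.trans (image_mono subset_closure)) hcl hy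
    obtain ⟨z, hz, rfl⟩ := this
    refine ⟨z, ?_, rfl⟩
    by_contra hzU
    have : z ∈ f ⁻¹' N ∩ frontier U := ⟨hyN, hz, fun h => hzU (interior_subset h)⟩
    rw [hfr] at this; exact this

lemma FinBranched.image_nhds {f : S2 → S2} {V : Set S2} {d : ℕ} (h : FinBranched f V d)
    {U : Set S2} (hU : IsOpen U) {y : S2} (hy : y ∈ f '' U) (hyV : y ∉ V) : f '' U ∈ 𝓝 y := by
  obtain ⟨x, hx, rfl⟩ := hy
  rw [← h.nhds x hyV]
  exact image_mem_map (hU.mem_nhds hx)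

lemma FinBranched.finite_fiber {f : S2 → S2} {V : Set S2} {d : ℕ} (h : FinBranched f V d)
    {y : S2} (hy : y ∉ V) : (f ⁻¹' {y}).Finite ∧ (f ⁻¹' {y}).Nonempty := by
  have h1 := h.card y hy
  have h2 := h.two_le
  have : (f ⁻¹' {y}).ncard ≠ 0 := by omega
  exact ⟨finite_of_ncard_ne_zero this, nonempty_of_ncard_ne_zero this⟩

/-- An open set `U` whose boundary is disjoint from the preimage of a region `N` covers `N` as soon
as it meets this preimage. Near a critical value `v` the image is open because `v` does not
disconnect its neighbourhoods. -/
lemma FinBranched.subset_image {f : S2 → S2} {V : Set S2} {d : ℕ} (h : FinBranched f V d)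
    {U N : Set S2} (hU : IsOpen U) (hN : IsOpen N) (hNc : IsPreconnected N)
    (hfr : f ⁻¹' N ∩ frontier U = ∅) (hne : (U ∩ f ⁻¹' N).Nonempty) : N ⊆ f '' U := by
  refine subset_image_of_open h.cont hN hNc hfr hne ?_
  rintro v ⟨hv, hvN⟩
  by_cases hvV : v ∈ V
  swap
  · exact h.image_nhds hU hv hvV
  have hVc : IsClosed (V \ {v}) := (h.fin.subset sdiff_subset).isClosed
  obtain ⟨M, hM, hvM, hMN, hMc, hMp⟩ := exists_punctured_nhd (hN.inter hVc.isOpen_compl)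
    ⟨hvN, fun h => h.2 rfl⟩
  by_cases hmeet : (U ∩ f ⁻¹' (M \ {v})).Nonempty
  · have : M \ {v} ⊆ f '' U := by
      refine subset_image_of_open h.cont (hM.sdiff isClosed_singleton) hMp ?_ hmeet ?_
      · rw [eq_empty_iff_forall_notMem]
        rintro x ⟨hx, hxU⟩
        have : x ∈ f ⁻¹' N ∩ frontier U := ⟨(hMN hx.1).1, hxU⟩
        rw [hfr] at this; exact this
      · rintro y ⟨hy, hyM⟩
        exact h.image_nhds hU hy fun hyV => (hMN hyM.1).2 ⟨hyV, hyM.2⟩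
    refine mem_of_superset (hM.mem_nhds hvM) fun y hy => ?_
    by_cases hyv : y = v
    · exact hyv ▸ hv
    · exact this ⟨hy, hyv⟩
  · -- otherwise the part of the fibre over `v` in `U` is clopen, so `f` is constant
    exfalso
    rw [not_nonempty_iff_eq_empty, eq_empty_iff_forall_notMem] at hmeet
    have e1 : f ⁻¹' {v} ∩ U = f ⁻¹' M ∩ U := by
      ext x
      constructor
      · rintro ⟨hx, hxU⟩
        exact ⟨by rw [mem_preimage, show f x = v from hx]; exact hvM, hxU⟩
      · rintro ⟨hx, hxU⟩
        refine ⟨?_, hxU⟩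
        by_contra hxv
        exact hmeet x ⟨hxU, hx, hxv⟩
    have e2 : f ⁻¹' {v} ∩ U = f ⁻¹' {v} ∩ closure U := by
      refine (inter_subset_inter_right _ subset_closure).antisymm ?_
      rintro x ⟨hx, hxU⟩
      refine ⟨hx, ?_⟩
      by_contra hxn
      have : x ∈ f ⁻¹' N ∩ frontier U :=
        ⟨by rw [mem_preimage, show f x = v from hx]; exact hvN, hxU,
          fun h => hxn (interior_subset h)⟩
      rw [hfr] at this; exact this
    have hclopen : IsClopen (f ⁻¹' {v} ∩ U) := by
      refine ⟨?_, ?_⟩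
      · rw [e2]; exact (isClosed_singleton.preimage h.cont).inter isClosed_closure
      · rw [e1]; exact (hM.preimage h.cont).inter hU
    have := preconnectedSpace_S2
    obtain ⟨x, hxU, hxv⟩ := hv
    have huniv := hclopen.eq_univ ⟨x, hxv, hxU⟩
    obtain ⟨y, hyV⟩ := (dense_compl_finite h.fin).nonempty_iff.2 ⟨v⟩
    obtain ⟨z, hz⟩ := (h.finite_fiber hyV).2
    have hzv : z ∈ f ⁻¹' {v} ∩ U := huniv ▸ mem_univ z
    have : y = v := (show f z = y from hz).symm.trans hzv.1
    exact hyV (this ▸ hvV)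

lemma FinBranched.surj {f : S2 → S2} {V : Set S2} {d : ℕ} (h : FinBranched f V d) (y : S2) :
    (f ⁻¹' {y}).Nonempty := by
  have := preconnectedSpace_S2
  obtain ⟨x, -, hx⟩ := h.subset_image (U := univ) (N := univ) isOpen_univ isOpen_univ
    isPreconnected_univ (by simp) ⟨y, by simp⟩ (mem_univ y)
  exact ⟨x, hx⟩

/-- Let `S` be a nonempty relatively clopen part of the fibre over `y`. Points close to `y` have
preimages close to `S`: if `B` accumulates at `y`, then its preimage accumulates at `S`. -/
lemma FinBranched.lift {f : S2 → S2} {V : Set S2} {d : ℕ} (h : FinBranched f V d)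
    {y : S2} {S B : Set S2} (hS : S ⊆ f ⁻¹' {y}) (hne : S.Nonempty) (hSc : IsClosed S)
    (hSc' : IsClosed (f ⁻¹' {y} \ S)) (hy : y ∈ closure B) :
    (S ∩ closure (f ⁻¹' B)).Nonempty := by
  by_contra hcon
  rw [not_nonempty_iff_eq_empty, eq_empty_iff_forall_notMem] at hcon
  obtain ⟨U, hU, hSU, hUc⟩ := normal_exists_closure_subset hSc
    (isClosed_closure.union hSc').isOpen_compl
    (show S ⊆ (closure (f ⁻¹' B) ∪ (f ⁻¹' {y} \ S))ᶜ from fun x hx hx' =>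
      hx'.elim (fun h1 => hcon x ⟨hx, h1⟩) fun h1 => h1.2 hx)
  have hFc : IsClosed (f '' frontier U) := (isClosed_frontier.isCompact.image h.cont).isClosed
  have hyF : y ∈ (f '' frontier U)ᶜ := by
    rintro ⟨x, hx, hxy⟩
    by_cases hxS : x ∈ S
    · rw [hU.frontier_eq] at hx
      exact hx.2 (hSU hxS)
    · exact hUc (frontier_subset_closure hx) (Or.inr ⟨hxy, hxS⟩)
  have := locallyConnectedSpace_S2
  have hN : IsOpen (connectedComponentIn (f '' frontier U)ᶜ y) :=
    hFc.isOpen_compl.connectedComponentIn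
  have hyN := mem_connectedComponentIn hyF
  obtain ⟨s, hs⟩ := hne
  have hsub := h.subset_image hU hN isPreconnected_connectedComponentIn ?_
    ⟨s, hSU hs, by rw [mem_preimage, show f s = y from hS hs]; exact hyN⟩
  · obtain ⟨b, hbN, hbB⟩ := _root_.mem_closure_iff.1 hy _ hN hyN
    obtain ⟨u, hu, rfl⟩ := hsub hbN
    exact hUc (subset_closure hu) (Or.inl (subset_closure hbB))
  · rw [eq_empty_iff_forall_notMem]
    rintro x ⟨hx, hxU⟩
    exact connectedComponentIn_subset _ _ hx ⟨x, hxU, rfl⟩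

/-! ### Preimages of continua -/

/-- A nonempty relatively clopen part of the preimage of a continuum maps onto the continuum. -/
lemma FinBranched.image_clopen {f : S2 → S2} {V : Set S2} {d : ℕ} (h : FinBranched f V d)
    {Y S : Set S2} (hY : IsContinuum Y) (hSY : S ⊆ f ⁻¹' Y) (hne : S.Nonempty) (hS : IsClosed S)
    (hS' : IsClosed (f ⁻¹' Y \ S)) : Y ⊆ f '' S := by
  by_contra hcon
  obtain ⟨y₁, hy₁, hy₁S⟩ := Set.not_subset.1 hcon
  obtain ⟨s, hs⟩ := hne
  obtain ⟨y, hyY, ⟨x, hxS, hxy⟩, hy2⟩ := isPreconnected_closed_iff.1 hY.2.isPreconnected (f '' S)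
    (closure (Y \ f '' S)) (hS.isCompact.image h.cont).isClosed isClosed_closure
    (fun y hy => by
      by_cases hyS : y ∈ f '' S
      · exact Or.inl hyS
      · exact Or.inr (subset_closure ⟨hy, hyS⟩))
    ⟨f s, hSY hs, s, hs, rfl⟩ ⟨y₁, hy₁, subset_closure ⟨hy₁, hy₁S⟩⟩
  have hcl : IsClosed (f ⁻¹' {y}) := isClosed_singleton.preimage h.cont
  have e : f ⁻¹' {y} \ (S ∩ f ⁻¹' {y}) = (f ⁻¹' Y \ S) ∩ f ⁻¹' {y} := by
    ext z
    constructor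
    · rintro ⟨hz, hz'⟩
      exact ⟨⟨by rw [mem_preimage, show f z = y from hz]; exact hyY, fun h => hz' ⟨h, hz⟩⟩, hz⟩
    · rintro ⟨hz, hz'⟩
      exact ⟨hz', fun h => hz.2 h.1⟩
  obtain ⟨z, ⟨hzS, -⟩, hz⟩ := h.lift (S := S ∩ f ⁻¹' {y}) inter_subset_right ⟨x, hxS, hxy⟩
    (hS.inter hcl) (by rw [e]; exact hS'.inter hcl) hy2
  have : f ⁻¹' (Y \ f '' S) ⊆ f ⁻¹' Y \ S := fun w hw => ⟨hw.1, fun hwS => hw.2 ⟨w, hwS, rfl⟩⟩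
  exact (closure_minimal this hS' hz).2 hzS

/-- The components of the preimage of a continuum all meet one finite set: the limits, along an
ultrafilter converging to a point of the continuum, of the points in generic fibres. -/
lemma FinBranched.finite_components {f : S2 → S2} {V : Set S2} {d : ℕ} (h : FinBranched f V d)
    {Y : Set S2} (hY : IsContinuum Y) :
    ∃ Λ : Set S2, Λ.Finite ∧ ∀ p ∈ f ⁻¹' Y, (connectedComponentIn (f ⁻¹' Y) p ∩ Λ).Nonempty := by
  obtain ⟨y₀, hy₀⟩ := hY.2.nonempty
  have hnb : (𝓝[Vᶜ] y₀).NeBot := mem_closure_iff_nhdsWithin_neBot.1 (dense_compl_finite h.fin y₀)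
  set 𝒰 := Ultrafilter.of (𝓝[Vᶜ] y₀)
  have h𝒰 : (𝒰 : Filter S2) ≤ 𝓝[Vᶜ] y₀ := Ultrafilter.of_le _
  have hs : ∀ y, ∃ s : Fin d → S2, y ∉ V → f ⁻¹' {y} ⊆ range s := by
    intro y
    by_cases hy : y ∈ V
    · exact ⟨fun _ => y₀, fun h => absurd hy h⟩
    · have hfin : Finite (f ⁻¹' {y}) := (h.finite_fiber hy).1
      have hc : Nat.card (f ⁻¹' {y}) = d := by rw [← h.card y hy]; rfl
      have e := (Finite.equivFinOfCardEq hc).symm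
      refine ⟨fun i => e i, fun _ x hx => ⟨e.symm ⟨x, hx⟩, by simp⟩⟩
  -- `s y` enumerates the fibre over `y ∉ V`
  choose s hs using hs
  have hlim : ∀ i : Fin d, ∃ l, Tendsto (fun y => s y i) 𝒰 (𝓝 l) := by
    intro i
    obtain ⟨l, -, hl⟩ := isCompact_univ.ultrafilter_le_nhds (𝒰.map fun y => s y i) (by simp)
    exact ⟨l, hl⟩
  choose l hl using hlim
  have hcl : IsClosed (f ⁻¹' Y) := hY.1.isClosed.preimage h.cont
  refine ⟨range l, finite_range l, fun p hp => ?_⟩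
  by_contra hcon
  obtain ⟨S, hSY, hpS, hS, hS', hSl⟩ := clopen_sep hcl.isCompact hp (finite_range l).isClosed
    (not_nonempty_iff_eq_empty.1 hcon)
  have hlS : ∀ i, Sᶜ ∈ 𝓝 (l i) := fun i => hS.isOpen_compl.mem_nhds fun hi => by
    have : l i ∈ S ∩ range l := ⟨hi, i, rfl⟩
    rw [hSl] at this; exact this
  choose C hC hCcl hCS using fun i => exists_mem_nhds_isClosed_subset (hlS i)
  set B : Set S2 := {y | y ∉ V ∧ ∀ i, s y i ∈ C i}
  have hB : B ∈ (𝒰 : Filter S2) := by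
    have h1 : ∀ᶠ y in (𝒰 : Filter S2), y ∉ V := h𝒰 self_mem_nhdsWithin
    have h2 : ∀ᶠ y in (𝒰 : Filter S2), ∀ i, s y i ∈ C i := eventually_all.2 fun i => hl i (hC i)
    exact h1.and h2
  have hy₀B : y₀ ∈ closure B :=
    mem_closure_iff_ultrafilter.2 ⟨𝒰, hB, h𝒰.trans nhdsWithin_le_nhds⟩
  obtain ⟨x, hxS, hxy⟩ := h.image_clopen hY hSY ⟨p, hpS⟩ hS hS' hy₀
  have hcl' : IsClosed (f ⁻¹' {y₀}) := isClosed_singleton.preimage h.cont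
  have e : f ⁻¹' {y₀} \ (S ∩ f ⁻¹' {y₀}) = (f ⁻¹' Y \ S) ∩ f ⁻¹' {y₀} := by
    ext z
    constructor
    · rintro ⟨hz, hz'⟩
      exact ⟨⟨by rw [mem_preimage, show f z = y₀ from hz]; exact hy₀, fun h => hz' ⟨h, hz⟩⟩, hz⟩
    · rintro ⟨hz, hz'⟩
      exact ⟨hz', fun h => hz.2 h.1⟩
  obtain ⟨z, ⟨hzS, -⟩, hz⟩ := h.lift (S := S ∩ f ⁻¹' {y₀}) inter_subset_right ⟨x, hxS, hxy⟩
    (hS.inter hcl') (by rw [e]; exact hS'.inter hcl') hy₀B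
  have hsub : f ⁻¹' B ⊆ ⋃ i, C i := by
    intro w hw
    obtain ⟨i, hi⟩ := hs (f w) hw.1 (show w ∈ f ⁻¹' {f w} from rfl)
    exact mem_iUnion.2 ⟨i, hi ▸ hw.2 i⟩
  obtain ⟨i, hi⟩ := mem_iUnion.1 (closure_minimal hsub (isClosed_iUnion_of_finite hCcl) hz)
  exact hCS i hi hzS

/-- The preimage of a continuum is a union of countably (indeed finitely) many continua, namely its
components. -/
lemma FinBranched.preimage_continuum {f : S2 → S2} {V : Set S2} {d : ℕ} (h : FinBranched f V d)
    {Y : Set S2} (hY : IsContinuum Y) :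
    ∃ 𝒞 : Set (Set S2), 𝒞.Countable ∧ (∀ K ∈ 𝒞, IsContinuum K) ∧ ⋃₀ 𝒞 = f ⁻¹' Y := by
  obtain ⟨Λ, hΛ, hmeet⟩ := h.finite_components hY
  have hc : IsCompact (f ⁻¹' Y) := (hY.1.isClosed.preimage h.cont).isCompact
  refine ⟨connectedComponentIn (f ⁻¹' Y) '' (f ⁻¹' Y), ?_, ?_, ?_⟩
  · refine (hΛ.countable.image (connectedComponentIn (f ⁻¹' Y))).mono ?_
    rintro _ ⟨p, hp, rfl⟩
    obtain ⟨q, hq, hqΛ⟩ := hmeet p hp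
    exact ⟨q, hqΛ, (connectedComponentIn_eq hq).symm⟩
  · rintro _ ⟨p, hp, rfl⟩
    exact isContinuum_component hc hp
  · refine (sUnion_subset ?_).antisymm fun p hp =>
      mem_sUnion_of_mem (mem_connectedComponentIn hp) ⟨p, hp, rfl⟩
    rintro _ ⟨p, hp, rfl⟩
    exact connectedComponentIn_subset _ _

/-! ### Preimages of the pieces of the Julia set -/

/-- Let `B` be the part of `A i` off the other pieces. The points of the Julia set over `B` form a
connected set, since they all lie in one piece `A k`: every `A k` lies over at most one of the sets
`B`, every `B` is met by the image of some `A k`, and there are as many `k` as there are `i`. -/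
lemma FinBranched.isPreconnected_piece {f : S2 → S2} {V R : Set S2} {d n : ℕ}
    (h : FinBranched f V d) (hRo : IsOpen R) (hRc : IsConnected R) (hR : f ⁻¹' R = R)
    {A : Fin n → Set S2} (hA : IsIrreducibleDecomposition (frontier R) A) (i : Fin n) :
    IsPreconnected (frontier R ∩ f ⁻¹' (A i \ ⋃ l ∈ ({i}ᶜ : Set (Fin n)), A l)) ∧
      A i ⊆ closure (A i \ ⋃ l ∈ ({i}ᶜ : Set (Fin n)), A l) := by
  obtain ⟨hInd, hU, hirr⟩ := hA
  have hJ : frontier R = closure R \ R := hRo.frontier_eq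
  have hAcl : ∀ k, A k ⊆ closure R := fun k => (hInd k).2.trans frontier_subset_closure
  have hAR : ∀ k, A k ∩ R = ∅ := fun k => by
    rw [eq_empty_iff_forall_notMem]
    rintro x ⟨hx, hxR⟩
    have := (hInd k).2 hx
    rw [hJ] at this
    exact this.2 hxR
  have hfR : ∀ x, f x ∈ R ↔ x ∈ R := fun x => by
    rw [← mem_preimage, hR]
  have hfJ : ∀ x ∈ frontier R, f x ∈ frontier R := by
    intro x hx
    rw [hJ] at hx ⊢
    refine ⟨?_, fun h' => hx.2 ((hfR x).1 h')⟩
    exact closure_mono (image_subset_iff.2 hR.ge)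
      (image_closure_subset_closure_image h.cont ⟨x, hx.1, rfl⟩)
  set E : Fin n → Set S2 := fun i => ⋃ l ∈ ({i}ᶜ : Set (Fin n)), A l
  set B : Fin n → Set S2 := fun i => A i \ E i
  have hEcl : ∀ i, IsClosed (E i) := fun i =>
    (toFinite _).isClosed_biUnion fun l _ => (hInd l).1.1.1.isClosed
  have hBne : ∀ i, (B i).Nonempty := fun i => sdiff_nonempty.2 (hirr i)
  have hBE : ∀ i i', i ≠ i' → B i ⊆ E i' := fun i i' hii x hx =>
    mem_biUnion (show i ∈ ({i'}ᶜ : Set (Fin n)) from hii) hx.1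
  -- each `A i` is the closure of its essential part
  have hBd : ∀ i, A i ⊆ closure (B i) := by
    intro i
    have e : E i = ⋃₀ (A '' {i}ᶜ) := by rw [sUnion_image]
    have := diff_sUnion hRc (hInd i).1 (hAcl i) (hAR i)
      (((toFinite ({i}ᶜ : Set (Fin n))).image A).countable)
      (by rintro _ ⟨l, -, rfl⟩; exact ⟨(hInd l).1.1, hAR l⟩)
    rw [← e] at this
    exact (this.resolve_left (hBne i).ne_empty).2
  choose 𝒞 h𝒞c h𝒞 h𝒞U using fun l => h.preimage_continuum (hInd l).1.1
  have hD : ∀ k i, A k \ f ⁻¹' (E i) = ∅ ∨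
      (IsPreconnected (A k \ f ⁻¹' (E i)) ∧ A k ⊆ closure (A k \ f ⁻¹' (E i))) := by
    intro k i
    have e : f ⁻¹' (E i) = ⋃₀ (⋃ l ∈ ({i}ᶜ : Set (Fin n)), 𝒞 l) := by
      simp only [E, preimage_iUnion, sUnion_iUnion, h𝒞U]
    rw [e]
    refine diff_sUnion hRc (hInd k).1 (hAcl k) (hAR k)
      ((toFinite ({i}ᶜ : Set (Fin n))).countable.biUnion fun l _ => h𝒞c l) ?_
    intro F hF
    obtain ⟨l, -, hFl⟩ := mem_iUnion₂.1 hF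
    refine ⟨h𝒞 l F hFl, ?_⟩
    rw [eq_empty_iff_forall_notMem]
    rintro x ⟨hx, hxR⟩
    have h1 : x ∈ f ⁻¹' A l := h𝒞U l ▸ mem_sUnion_of_mem hx hFl
    have : f x ∈ A l ∩ R := ⟨h1, (hfR x).2 hxR⟩
    rw [hAR l] at this; exact this
  have hDB : ∀ k i x, x ∈ A k → (x ∈ A k \ f ⁻¹' (E i) ↔ f x ∈ B i) := by
    intro k i x hx
    refine ⟨fun hx' => ⟨?_, hx'.2⟩, fun hx' => ⟨hx, hx'.2⟩⟩
    have := hfJ x ((hInd k).2 hx)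
    rw [hU] at this
    obtain ⟨l, hl⟩ := mem_iUnion.1 this
    by_cases hli : l = i
    · exact hli ▸ hl
    · exact absurd (mem_biUnion (show l ∈ ({i}ᶜ : Set (Fin n)) from hli) hl) hx'.2
  -- each piece `A k` lies over the essential part of at most one piece
  have huniq : ∀ k i i', (A k \ f ⁻¹' (E i)).Nonempty → (A k \ f ⁻¹' (E i')).Nonempty → i = i' := by
    rintro k i i' hi ⟨x, hxk, hx⟩
    by_contra hii
    have hd := ((hD k i).resolve_left hi.ne_empty).2
    have hsub : A k \ f ⁻¹' (E i) ⊆ f ⁻¹' (E i') := fun z hz => hBE i i' hii ((hDB k i z hz.1).1 hz)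
    exact hx (closure_minimal hsub ((hEcl i').preimage h.cont) (hd hxk))
  have hex : ∀ i, ∃ k, (A k \ f ⁻¹' (E i)).Nonempty := by
    intro i
    obtain ⟨y, hy⟩ := hBne i
    have hyJ := (hInd i).2 hy.1
    rw [hJ] at hyJ
    obtain ⟨x, hxy, hx⟩ := h.lift (subset_refl (f ⁻¹' {y})) (h.surj y)
      (isClosed_singleton.preimage h.cont) (by rw [sdiff_self]; exact isClosed_empty) hyJ.1
    rw [hR] at hx
    have hxy' : f x = y := hxy
    have hxJ : x ∈ frontier R := by
      rw [hJ]
      exact ⟨hx, fun hxR => hyJ.2 (hxy' ▸ (hfR x).2 hxR)⟩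
    rw [hU] at hxJ
    obtain ⟨k, hk⟩ := mem_iUnion.1 hxJ
    exact ⟨k, x, (hDB k i x hk).2 (hxy'.symm ▸ hy)⟩
  choose κ hκ using hex
  have hinj : Function.Injective κ := fun i i' hii => huniq (κ i) i i' (hκ i) (hii ▸ hκ i')
  have hsurj := Finite.surjective_of_injective hinj
  refine ⟨?_, hBd i⟩
  have : frontier R ∩ f ⁻¹' (B i) = A (κ i) \ f ⁻¹' (E i) := by
    ext x
    constructor
    · rintro ⟨hxJ, hx⟩
      rw [hU] at hxJ
      obtain ⟨k, hk⟩ := mem_iUnion.1 hxJ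
      have hxD := (hDB k i x hk).2 hx
      obtain ⟨i', rfl⟩ := hsurj k
      have : i' = i := huniq (κ i') i' i (hκ i') ⟨x, hxD⟩
      exact this ▸ hxD
    · intro hx
      exact ⟨(hInd _).2 hx.1, (hDB _ i x hx.1).1 hx⟩
  change IsPreconnected (frontier R ∩ f ⁻¹' (B i))
  rw [this]
  exact ((hD (κ i) i).resolve_left (hκ i).ne_empty).1

/-- The preimage of `A i \ A j` may have many points off the Julia set, but each part of a separation
of this preimage meets the connected set of `isPreconnected_piece`. -/
lemma FinBranched.isPreconnected_preimage_diff {f : S2 → S2} {V R : Set S2} {d n : ℕ}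
    (h : FinBranched f V d) (hRo : IsOpen R) (hRc : IsConnected R) (hR : f ⁻¹' R = R)
    {A : Fin n → Set S2} (hA : IsIrreducibleDecomposition (frontier R) A) (i j : Fin n) :
    IsPreconnected (f ⁻¹' (A i \ A j)) := by
  by_cases hij : i = j
  · subst hij
    rw [sdiff_self]
    exact isPreconnected_empty
  obtain ⟨hG, hdense⟩ := h.isPreconnected_piece hRo hRc hR hA i
  set B := A i \ ⋃ l ∈ ({i}ᶜ : Set (Fin n)), A l
  have hBP : B ⊆ A i \ A j := fun x hx => ⟨hx.1, fun hxj =>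
    hx.2 (mem_biUnion (show j ∈ ({i}ᶜ : Set (Fin n)) from fun h => hij h.symm) hxj)⟩
  have hBJ : B ⊆ frontier R := fun x hx => (hA.1 i).2 hx.1
  have hJ : frontier R = closure R \ R := hRo.frontier_eq
  -- each side of a separation of the preimage meets the connected set over `B`
  have key : ∀ U W : Set S2, IsOpen U → IsOpen W → f ⁻¹' (A i \ A j) ⊆ U ∪ W →
      f ⁻¹' (A i \ A j) ∩ (U ∩ W) = ∅ → (f ⁻¹' (A i \ A j) ∩ W).Nonempty →
      ((frontier R ∩ f ⁻¹' B) ∩ W).Nonempty := by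
    rintro U W hUo hWo hUW hd ⟨x, hxP, hxW⟩
    have step : ∀ y ∈ A i \ A j, ∀ C : Set S2, (f ⁻¹' {y} ∩ W).Nonempty → y ∈ closure C →
        ((f ⁻¹' {y} ∩ W) ∩ closure (f ⁻¹' C)).Nonempty := by
      intro y hy C hne hyC
      have hcl : IsClosed (f ⁻¹' {y}) := isClosed_singleton.preimage h.cont
      have hsub : f ⁻¹' {y} ⊆ f ⁻¹' (A i \ A j) := fun z hz => by
        rw [mem_preimage, show f z = y from hz]; exact hy
      have e : f ⁻¹' {y} ∩ W = f ⁻¹' {y} \ U := by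
        ext z
        constructor
        · rintro ⟨hz, hzW⟩
          refine ⟨hz, fun hzU => ?_⟩
          have : z ∈ f ⁻¹' (A i \ A j) ∩ (U ∩ W) := ⟨hsub hz, hzU, hzW⟩
          rw [hd] at this; exact this
        · rintro ⟨hz, hzU⟩
          exact ⟨hz, (hUW (hsub hz)).resolve_left hzU⟩
      refine h.lift inter_subset_left hne ?_ ?_ hyC
      · rw [e]; exact hcl.sdiff hUo
      · rw [sdiff_self_inter]; exact hcl.sdiff hWo
    obtain ⟨x₁, ⟨-, hx₁W⟩, hx₁⟩ := step (f x) hxP B ⟨x, rfl, hxW⟩ (hdense hxP.1)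
    obtain ⟨x₂, hx₂W, hx₂⟩ := _root_.mem_closure_iff.1 hx₁ W hWo hx₁W
    have hfx := hBJ hx₂
    rw [hJ] at hfx
    obtain ⟨x₃, ⟨hx₃, hx₃W⟩, hx₃R⟩ := step (f x₂) (hBP hx₂) R ⟨x₂, rfl, hx₂W⟩ hfx.1
    rw [hR] at hx₃R
    have e : f x₃ = f x₂ := hx₃
    refine ⟨x₃, ⟨?_, ?_⟩, hx₃W⟩
    · rw [hJ]
      refine ⟨hx₃R, fun hR3 => hfx.2 ?_⟩
      rw [← hR] at hR3
      exact e ▸ hR3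
    · rw [mem_preimage, e]; exact hx₂
  rw [isPreconnected_iff_subset_of_disjoint]
  intro U W hU hW hUW hd
  by_contra hcon
  push Not at hcon
  obtain ⟨⟨x, hx, hxU⟩, ⟨z, hz, hzW⟩⟩ :=
    And.intro (Set.not_subset.1 hcon.1) (Set.not_subset.1 hcon.2)
  obtain ⟨a, ha, haW⟩ := key U W hU hW hUW hd ⟨x, hx, (hUW hx).resolve_left hxU⟩
  obtain ⟨b, hb, hbU⟩ := key W U hW hU (by rwa [union_comm]) (by rwa [inter_comm W])
    ⟨z, hz, (hUW hz).resolve_right hzW⟩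
  have hGP : frontier R ∩ f ⁻¹' B ⊆ f ⁻¹' (A i \ A j) := fun w hw => hBP hw.2
  obtain ⟨w, hw, hwUW⟩ := hG U W hU hW (hGP.trans hUW) ⟨b, hb, hbU⟩ ⟨a, ha, haW⟩
  have : w ∈ f ⁻¹' (A i \ A j) ∩ (U ∩ W) := ⟨hGP hw, hwUW⟩
  rw [hd] at this; exact this

/-- If `{A 1, …, A n}` is an irreducible decomposition of the Julia set of a
polynomial-like mapping of degree `d ≥ 2`, then `f⁻¹(A i \ A j)` is connected. -/
theorem preimage_diff_connected
    (f : S2 → S2) (d : ℕ) (R : Set S2) (c : S2)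
    (hd : 2 ≤ d) (hf : IsPolynomialLike f d R c)
    {n : ℕ} (A : Fin n → Set S2)
    (hA : IsIrreducibleDecomposition (frontier R) A) :
    ∀ i j, IsPreconnected (f ⁻¹' (A i \ A j)) := by
  obtain ⟨⟨hcont, Crit, hCrit, -, hcov, hcard⟩, hRo, hRc, -, -, hR, -, -⟩ := hf
  have hb : FinBranched f (f '' Crit) d :=
    { cont := hcont
      fin := hCrit.image f
      nhds := fun x hx => hcov.isLocalHomeomorphOn.map_nhds_eq hx
      card := hcard
      two_le := hd }
  exact fun i j => hb.isPreconnected_preimage_diff hRo hRc hR hA i j
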